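/- arXiv:1201.3014 — 2 statements merged into one kernel-verified Lean document; each statement's English description precedes it below -/
import Mathlib

section
/- Let G be a plane graph with outer face bounded by a cycle F, let xy be an edge of F, and let L be a list assignment for G such that |L(v)| ≥ 5 for every vertex v not on F, |L(v)| ≥ 3 for every vertex v of F other than x and y, |L(x)| = |L(y)| = 1, and L(x) ≠ L(y). Then G is L-colorable. -/
open Set

noncomputable section

/-- A drawing of a simple graph in the plane: vertices are mapped to distinct points,
each edge is realized by a simple arc joining the images of its endpoints, arcs do not
pass through vertex points, any two arcs realizing distinct edges meet in at most one
point, and no point of the plane that is not a vertex point lies on three or more arcs. -/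
structure Drawing {V : Type} (G : SimpleGraph V) where
  pos : V → ℝ × ℝ
  pos_inj : Function.Injective pos
  arc : ∀ ⦃u v : V⦄, G.Adj u v → Path (pos u) (pos v)
  arc_symm : ∀ ⦃u v : V⦄ (h : G.Adj u v), arc h.symm = (arc h).symm
  arc_inj : ∀ ⦃u v : V⦄ (h : G.Adj u v), Function.Injective ⇑(arc h)
  arc_vertex : ∀ ⦃u v : V⦄ (h : G.Adj u v) (t : unitInterval) (w : V),
    arc h t = pos w → t = 0 ∨ t = 1
  arc_meet_once : ∀ ⦃u v x y : V⦄ (h₁ : G.Adj u v) (h₂ : G.Adj x y),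
    s(u, v) ≠ s(x, y) → (Set.range ⇑(arc h₁) ∩ Set.range ⇑(arc h₂)).Subsingleton
  arc_no_triple : ∀ ⦃u₁ v₁ u₂ v₂ u₃ v₃ : V⦄ (h₁ : G.Adj u₁ v₁) (h₂ : G.Adj u₂ v₂)
    (h₃ : G.Adj u₃ v₃), s(u₁, v₁) ≠ s(u₂, v₂) → s(u₁, v₁) ≠ s(u₃, v₃) →
    s(u₂, v₂) ≠ s(u₃, v₃) →
    ∀ p ∈ Set.range ⇑(arc h₁) ∩ Set.range ⇑(arc h₂) ∩ Set.range ⇑(arc h₃),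
      ∃ w : V, p = pos w

namespace Drawing

variable {V : Type} {G : SimpleGraph V} (D : Drawing G)

/-- The set of points used by the arc of an edge. -/
def arcSet ⦃u v : V⦄ (h : G.Adj u v) : Set (ℝ × ℝ) :=
  Set.range ⇑(D.arc h)

/-- The set of interior points of the arc of an edge. -/
def arcInterior ⦃u v : V⦄ (h : G.Adj u v) : Set (ℝ × ℝ) :=
  ⇑(D.arc h) '' {t : unitInterval | t ≠ 0 ∧ t ≠ 1}

/-- All points of the plane used by the drawing. -/
def graphSet : Set (ℝ × ℝ) :=
  Set.range D.pos ∪ ⋃ (u : V) (v : V) (h : G.Adj u v), D.arcSet h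

/-- A crossing of a drawing: a point interior to the arcs of two distinct edges. -/
def IsCrossing (p : ℝ × ℝ) : Prop :=
  ∃ (u v x y : V) (h₁ : G.Adj u v) (h₂ : G.Adj x y),
    s(u, v) ≠ s(x, y) ∧ p ∈ D.arcInterior h₁ ∧ p ∈ D.arcInterior h₂

/-- A drawing is plane if it has no crossings. -/
def IsPlane : Prop := ∀ p : ℝ × ℝ, ¬ D.IsCrossing p

/-- The faces of a drawing are the connected components of the complement
of the drawing. -/
def IsFace (f : Set (ℝ × ℝ)) : Prop :=
  ∃ q : ℝ × ℝ, q ∉ D.graphSet ∧ f = connectedComponentIn D.graphSetᶜ q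

/-- The outer (unbounded) face of a drawing. -/
def outerFace : Set (ℝ × ℝ) :=
  {p : ℝ × ℝ | p ∉ D.graphSet ∧
    ¬ Bornology.IsBounded (connectedComponentIn D.graphSetᶜ p)}

/-- A vertex lies on the outer face if its point is on the boundary of the outer face. -/
def OnOuter (v : V) : Prop := D.pos v ∈ frontier D.outerFace

/-- The set of points of the plane used by the drawing of a walk. -/
def walkSet {a b : V} (W : G.Walk a b) : Set (ℝ × ℝ) :=
  D.pos '' {v : V | v ∈ W.support} ∪ ⋃ d ∈ W.darts, D.arcSet d.adj

/-- A closed walk bounds the outer face if the boundary of the outer face is exactly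
the drawing of the walk. -/
def BoundsOuter {a : V} (W : G.Walk a a) : Prop :=
  frontier D.outerFace = D.walkSet W

end Drawing

/-- The open region enclosed by a set `S` (typically the drawing of a cycle):
all points outside `S` whose connected component in the complement of `S` is bounded. -/
def enclosed (S : Set (ℝ × ℝ)) : Set (ℝ × ℝ) :=
  {p : ℝ × ℝ | p ∉ S ∧ Bornology.IsBounded (connectedComponentIn Sᶜ p)}

namespace Drawing

variable {V : Type} {G : SimpleGraph V} (D : Drawing G)

/-- The closed disc bounded by (the drawing of) a closed walk. -/
def closedDisc {a : V} (W : G.Walk a a) : Set (ℝ × ℝ) :=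
  D.walkSet W ∪ enclosed (D.walkSet W)

/-- The endpoints of the (two) edges incident with a crossing point `p`. -/
def crossingEnds (p : ℝ × ℝ) : Set V :=
  {w : V | ∃ (z : V) (h : G.Adj w z), p ∈ D.arcInterior h}

end Drawing

/-- A proper colouring of `G` from the lists `L`. -/
def IsListColoring {V : Type} (G : SimpleGraph V) (L : V → Finset ℕ) (c : V → ℕ) : Prop :=
  (∀ v, c v ∈ L v) ∧ ∀ ⦃u v : V⦄, G.Adj u v → c u ≠ c v

/-- `G` is colourable from the lists `L`. -/
def ListColorable {V : Type} (G : SimpleGraph V) (L : V → Finset ℕ) : Prop :=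
  ∃ c : V → ℕ, IsListColoring G L c

/-! Add to the plane graph a vertex in its unbounded face, joined to the vertices on the boundary of
that face. The new graph has no weak `K₅`: five points of the plane cannot be joined pairwise so
that the paths of independent pairs are disjoint. This is proved with continuous logarithms. For any
four of the five points, an alternating sum of the windings of the triangle on three of them around
the fourth is an odd multiple of `2 * π * I`, whereas the alternating sum of these five numbers
vanishes.

The rest is Thomassen's induction, in which the absence of a weak `K₅` is the only trace of
planarity. In place of the outer cycle one keeps a connected set `Z` of vertices already dealt with,
at first the new vertex alone; a vertex counts as outer if it has a neighbour in `Z`. An outer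
vertex `v` adjacent to a precoloured one either is the end of a separating edge between outer
vertices, and one colours the two sides in turn, or has at most two outer neighbours. In the latter
case, two colours of `v` that differ from the precoloured one are removed from the lists of its
neighbours that are not outer, `v` is moved to `Z`, and one of the two colours is still available
for `v` at the end. -/

namespace Thomassen

/-- The sets `E i j`, `i < j`, attached to the edges of a complete graph are disjoint for edges
without common end. -/
def IndependentDisjoint {ι X : Type*} [LT ι] (E : ι → ι → Set X) : Prop :=
  ∀ ⦃i j k l⦄, i < j → k < l → i < k → j ≠ k → j ≠ l → Disjoint (E i j) (E k l)

section ContinuousLog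

theorem exists_continuous_log {X : Type*} [TopologicalSpace X] [SimplyConnectedSpace X]
    [LocallyPathConnectedSpace X] {g : X → ℂ} (hg : Continuous g) (hg0 : ∀ x, g x ≠ 0) :
    ∃ f : X → ℂ, Continuous f ∧ ∀ x, Complex.exp (f x) = g x := by
  obtain ⟨x₀⟩ : Nonempty X := inferInstance
  obtain ⟨f, ⟨-, hf⟩, -⟩ := Complex.isCoveringMapOn_exp.existsUnique_continuousMap_lifts
    ⟨g, hg⟩ (a₀ := x₀) (Complex.exp_log (hg0 x₀)) hg0
  exact ⟨f, f.continuous, congrFun hf⟩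

theorem sub_eq_sub_of_exp_eq_exp {X : Type*} [TopologicalSpace X] [PreconnectedSpace X]
    {f g : X → ℂ} (hf : Continuous f) (hg : Continuous g)
    (h : ∀ x, Complex.exp (f x) = Complex.exp (g x)) (x y : X) : f y - f x = g y - g x := by
  have hexp (x : X) : Complex.exp (f x - g x) = 1 := by
    rw [Complex.exp_sub, h, div_self (Complex.exp_ne_zero _)]
  have hconst : f y - g y = f x - g x :=
    Complex.isCoveringMap_exp.const_of_comp (hf.sub hg) (fun a b => by simp [hexp]) y x
  linear_combination hconst

variable {a b c d m : ℂ}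

/-- The increment along `γ` of a continuous logarithm of `γ - m`; its imaginary part is the angle
swept by `γ` as seen from `m`. It is a junk value if `γ` passes through `m`. -/
def turn (m : ℂ) (γ : Path a b) : ℂ :=
  let f := Classical.epsilon fun f : ℝ → ℂ =>
    Continuous f ∧ ∀ t, Complex.exp (f t) = γ.extend t - m
  f 1 - f 0

theorem turn_eq_of_exp_eq {γ : Path a b} {f : ℝ → ℂ} (hf : Continuous f)
    (hexp : ∀ t, Complex.exp (f t) = γ.extend t - m) : turn m γ = f 1 - f 0 := by
  obtain ⟨hg, hgexp⟩ := Classical.epsilon_spec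
    (p := fun f : ℝ → ℂ => Continuous f ∧ ∀ t, Complex.exp (f t) = γ.extend t - m) ⟨f, hf, hexp⟩
  exact sub_eq_sub_of_exp_eq_exp hg hf (fun t => by rw [hgexp, hexp]) 0 1

theorem extend_mem_range {X : Type*} [TopologicalSpace X] {x y : X} (γ : Path x y) (t : ℝ) :
    γ.extend t ∈ range γ :=
  γ.extend_range ▸ mem_range_self t

theorem exp_turn {γ : Path a b} (hm : m ∉ range γ) :
    Complex.exp (turn m γ) = (b - m) / (a - m) := by
  obtain ⟨f, hf, hexp⟩ := exists_continuous_log (g := fun t : ℝ => γ.extend t - m)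
    (γ.continuous_extend.sub continuous_const)
    (fun t h => hm (sub_eq_zero.mp h ▸ extend_mem_range γ t))
  rw [turn_eq_of_exp_eq hf hexp, Complex.exp_sub, hexp, hexp, γ.extend_one, γ.extend_zero]

/- Both sides are computed from a logarithm of `γ s - δ t` on the square; on the two sides along
which `δ` moves it is corrected by `π * I`, since there `δ t - γ s` is needed. -/
theorem turn_sub_turn_of_disjoint {γ : Path a b} {δ : Path c d}
    (hdis : Disjoint (range γ) (range δ)) :
    turn b δ - turn a δ = turn d γ - turn c γ := by
  obtain ⟨f, hf, hexp⟩ := exists_continuous_log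
    (g := fun p : ℝ × ℝ => γ.extend p.1 - δ.extend p.2)
    ((γ.continuous_extend.comp continuous_fst).sub (δ.continuous_extend.comp continuous_snd))
    (fun p h => hdis.ne_of_mem (extend_mem_range γ p.1) (extend_mem_range δ p.2)
      (sub_eq_zero.mp h))
  have horizontal (t : ℝ) : turn (δ.extend t) γ = f (1, t) - f (0, t) :=
    turn_eq_of_exp_eq (f := fun s => f (s, t)) (by fun_prop) fun s => hexp (s, t)
  have vertical (s : ℝ) : turn (γ.extend s) δ = f (s, 1) - f (s, 0) := by
    rw [turn_eq_of_exp_eq (f := fun t => f (s, t) + Real.pi * Complex.I) (by fun_prop),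
      add_sub_add_right_eq_sub]
    intro t
    rw [Complex.exp_add, hexp, Complex.exp_pi_mul_I]
    ring
  have hsquare : turn (γ.extend 1) δ - turn (γ.extend 0) δ =
      turn (δ.extend 1) γ - turn (δ.extend 0) γ := by
    rw [horizontal, horizontal, vertical, vertical]
    ring
  simpa only [Path.extend_zero, Path.extend_one] using hsquare

end ContinuousLog

section VanKampen

variable {ι : Type*} {p : ι → ℂ} (γ : ∀ i j, Path (p i) (p j))

/-- The winding around `p m` of the triangle `p i`, `p j`, `p k` drawn by the paths `γ`, multiplied
by `2 * π * I`. -/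
def triangleWinding (m i j k : ι) : ℂ :=
  turn (p m) (γ i j) + turn (p m) (γ j k) - turn (p m) (γ i k)

/-- The alternating sum, over the four points `p i`, `p j`, `p k`, `p l`, of the winding of the
triangle on three of the points around the fourth one. -/
def windingSum (i j k l : ι) : ℂ :=
  triangleWinding γ i j k l - triangleWinding γ j i k l + triangleWinding γ k i j l -
    triangleWinding γ l i j k

/- The three square relations evaluate the winding sum to twice a sum of turns whose
exponential is `-1`. -/
theorem exists_odd_windingSum_eq {i j k l : ι} (h₁ : Disjoint (range (γ i j)) (range (γ k l)))
    (h₂ : Disjoint (range (γ i k)) (range (γ j l)))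
    (h₃ : Disjoint (range (γ i l)) (range (γ j k))) :
    ∃ n : ℤ, Odd n ∧ windingSum γ i j k l = n * (2 * Real.pi * Complex.I) := by
  have hs (x y : ι) : p x ∈ range (γ x y) := (γ x y).source_mem_range
  have ht (x y : ι) : p y ∈ range (γ x y) := (γ x y).target_mem_range
  let Y := turn (p j) (γ i l) - turn (p j) (γ i k) + turn (p k) (γ i j) - turn (p k) (γ i l) +
    turn (p l) (γ i k) - turn (p l) (γ i j)
  have hsum : windingSum γ i j k l = 2 * Y := by
    simp only [windingSum, triangleWinding, Y]
    linear_combination turn_sub_turn_of_disjoint h₂ - turn_sub_turn_of_disjoint h₁ -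
      turn_sub_turn_of_disjoint h₃
  have hY : Complex.exp (Y - Real.pi * Complex.I) = 1 := by
    have hij := sub_ne_zero.mpr (h₂.ne_of_mem (hs i k) (hs j l))
    have hik := sub_ne_zero.mpr (h₁.ne_of_mem (hs i j) (hs k l))
    have hil := sub_ne_zero.mpr (h₁.ne_of_mem (hs i j) (ht k l))
    have hjk := sub_ne_zero.mpr (h₁.ne_of_mem (ht i j) (hs k l))
    have hjl := sub_ne_zero.mpr (h₁.ne_of_mem (ht i j) (ht k l))
    have hkl := sub_ne_zero.mpr (h₂.ne_of_mem (ht i k) (ht j l))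
    simp only [Y, Complex.exp_sub, Complex.exp_add, Complex.exp_pi_mul_I,
      exp_turn (h₃.notMem_of_mem_right (hs j k)), exp_turn (h₂.notMem_of_mem_right (hs j l)),
      exp_turn (h₁.notMem_of_mem_right (hs k l)), exp_turn (h₃.notMem_of_mem_right (ht j k)),
      exp_turn (h₂.notMem_of_mem_right (ht j l)), exp_turn (h₁.notMem_of_mem_right (ht k l))]
    rw [← neg_sub (p j) (p l), ← neg_sub (p j) (p k), ← neg_sub (p k) (p l)]
    field_simp
  obtain ⟨n, hn⟩ := Complex.exp_eq_one_iff.mp hY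
  refine ⟨2 * n + 1, odd_two_mul_add_one n, ?_⟩
  push_cast
  linear_combination hsum + 2 * hn

theorem windingSum_alternating (i j k l m : ι) :
    windingSum γ j k l m - windingSum γ i k l m + windingSum γ i j l m - windingSum γ i j k m +
      windingSum γ i j k l = 0 := by
  simp only [windingSum, triangleWinding]
  ring

theorem not_independentDisjoint_range {p : Fin 5 → ℂ} (γ : ∀ i j, Path (p i) (p j)) :
    ¬ IndependentDisjoint fun i j => range (γ i j) := by
  intro hdis
  have hodd {i j k l : Fin 5} (hij : i < j) (hjk : j < k) (hkl : k < l) :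
      ∃ n : ℤ, Odd n ∧ windingSum γ i j k l = n * (2 * Real.pi * Complex.I) :=
    exists_odd_windingSum_eq γ
      (hdis hij hkl (hij.trans hjk) hjk.ne (hjk.trans hkl).ne)
      (hdis (hij.trans hjk) (hjk.trans hkl) hij hjk.ne' hkl.ne)
      (hdis (hij.trans (hjk.trans hkl)) hjk hij (hjk.trans hkl).ne' hkl.ne')
  obtain ⟨n₀, h₀, e₀⟩ := hodd (show 1 < 2 by decide) (show 2 < 3 by decide) (show 3 < 4 by decide)
  obtain ⟨n₁, h₁, e₁⟩ := hodd (show 0 < 2 by decide) (show 2 < 3 by decide) (show 3 < 4 by decide)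
  obtain ⟨n₂, h₂, e₂⟩ := hodd (show 0 < 1 by decide) (show 1 < 3 by decide) (show 3 < 4 by decide)
  obtain ⟨n₃, h₃, e₃⟩ := hodd (show 0 < 1 by decide) (show 1 < 2 by decide) (show 2 < 4 by decide)
  obtain ⟨n₄, h₄, e₄⟩ := hodd (show 0 < 1 by decide) (show 1 < 2 by decide) (show 2 < 3 by decide)
  have hodd_sum : Odd (n₀ - n₁ + n₂ - n₃ + n₄) :=
    (((h₀.sub_odd h₁).add_odd h₂).sub_odd h₃).add_odd h₄
  have hsum_zero : n₀ - n₁ + n₂ - n₃ + n₄ = 0 := by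
    have h : ((n₀ - n₁ + n₂ - n₃ + n₄ : ℤ) : ℂ) * (2 * Real.pi * Complex.I) = 0 := by
      push_cast
      linear_combination windingSum_alternating γ 0 1 2 3 4 - e₀ + e₁ - e₂ + e₃ - e₄
    exact_mod_cast (mul_eq_zero.mp h).resolve_right Complex.two_pi_I_ne_zero
  simp [hsum_zero] at hodd_sum

theorem not_independentDisjoint_of_joinedIn {p : Fin 5 → ℝ × ℝ} {K : Fin 5 → Fin 5 → Set (ℝ × ℝ)}
    (hK : ∀ i j, i < j → JoinedIn (K i j) (p i) (p j)) : ¬ IndependentDisjoint K := by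
  intro hdis
  let e := Complex.equivRealProdCLM.symm
  have hpath (i j : Fin 5) :
      ∃ γ : Path (e (p i)) (e (p j)), i < j → range γ ⊆ e '' K i j := by
    by_cases hij : i < j
    · refine ⟨(hK i j hij).somePath.map e.continuous, fun _ => ?_⟩
      rintro _ ⟨t, rfl⟩
      exact mem_image_of_mem e ((hK i j hij).somePath_mem t)
    · exact ⟨PathConnectedSpace.somePath _ _, fun h => absurd h hij⟩
  choose γ hγ using hpath
  exact not_independentDisjoint_range γ fun i j k l hij hkl hik hjk hjl =>
    ((disjoint_image_iff e.injective).mpr (hdis hij hkl hik hjk hjl)).mono (hγ i j hij) (hγ k l hkl)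

end VanKampen

section UnboundedComponents

variable {E : Type*} {C : Set E}

/-- The union of the unbounded connected components of the complement of `C`. -/
def unboundedComponents [PseudoMetricSpace E] (C : Set E) : Set E :=
  {p | p ∉ C ∧ ¬ Bornology.IsBounded (connectedComponentIn Cᶜ p)}

theorem connectedComponentIn_subset_unboundedComponents [PseudoMetricSpace E] {p : E}
    (hp : p ∈ unboundedComponents C) : connectedComponentIn Cᶜ p ⊆ unboundedComponents C :=
  fun _ hq => ⟨connectedComponentIn_subset _ _ hq, connectedComponentIn_eq hq ▸ hp.2⟩

theorem isOpen_unboundedComponents [PseudoMetricSpace E] [LocallyConnectedSpace E]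
    (hC : IsClosed C) : IsOpen (unboundedComponents C) :=
  isOpen_iff_forall_mem_open.mpr fun p hp =>
    ⟨connectedComponentIn Cᶜ p, connectedComponentIn_subset_unboundedComponents hp,
      hC.isOpen_compl.connectedComponentIn, mem_connectedComponentIn hp.1⟩

variable [NormedAddCommGroup E] [NormedSpace ℝ E]

theorem isPreconnected_setOf_le_norm (hE : 1 < Module.rank ℝ E) (R : ℝ) :
    IsPreconnected {p : E | R ≤ ‖p‖} := by
  rcases le_or_gt R 0 with hR | hR
  · simpa [hR.trans (norm_nonneg _)] using isPreconnected_univ (α := E)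
  have hcone : {p : E | R ≤ ‖p‖} =
      (fun q : ℝ × E => q.1 • q.2) '' (Ici 1 ×ˢ Metric.sphere (0 : E) R) := by
    ext p
    constructor
    · intro (hp : R ≤ ‖p‖)
      have hp0 : 0 < ‖p‖ := hR.trans_le hp
      refine ⟨(‖p‖ / R, (R / ‖p‖) • p), ⟨(one_le_div hR).mpr hp, ?_⟩, ?_⟩
      · rw [mem_sphere_zero_iff_norm, norm_smul, Real.norm_of_nonneg (by positivity),
          div_mul_cancel₀ _ hp0.ne']
      · change (‖p‖ / R) • (R / ‖p‖) • p = p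
        rw [smul_smul, div_mul_div_cancel₀ hR.ne', div_self hp0.ne', one_smul]
    · rintro ⟨⟨a, b⟩, ⟨ha : 1 ≤ a, hb⟩, rfl⟩
      rw [mem_sphere_zero_iff_norm] at hb
      change R ≤ ‖a • b‖
      rw [norm_smul, Real.norm_of_nonneg (zero_le_one.trans ha), hb]
      exact le_mul_of_one_le_left hR.le ha
  rw [hcone]
  exact (isPreconnected_Ici.prod (isPreconnected_sphere hE 0 R)).image _ (by fun_prop)

theorem isPreconnected_unboundedComponents (hE : 1 < Module.rank ℝ E)
    (hC : Bornology.IsBounded C) : IsPreconnected (unboundedComponents C) := by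
  obtain ⟨R, hCR⟩ := hC.subset_ball (0 : E)
  have hfarC : {p : E | R ≤ ‖p‖} ⊆ Cᶜ := fun p hp hpC =>
    (mem_ball_zero_iff.mp (hCR hpC)).not_ge hp
  have hmeets {p : E} (hp : p ∈ unboundedComponents C) :
      ∃ q ∈ connectedComponentIn Cᶜ p, R ≤ ‖q‖ := by
    by_contra! hsmall
    exact hp.2 (Metric.isBounded_ball.subset fun q hq => mem_ball_zero_iff.mpr (hsmall q hq))
  refine isPreconnected_of_forall_pair fun p hp p' hp' => ?_
  obtain ⟨q, hq, hRq⟩ := hmeets hp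
  obtain ⟨q', hq', hRq'⟩ := hmeets hp'
  have hq'p : q' ∈ connectedComponentIn Cᶜ p := by
    rw [connectedComponentIn_eq hq]
    exact (isPreconnected_setOf_le_norm hE R).subset_connectedComponentIn hRq hfarC hRq'
  refine ⟨connectedComponentIn Cᶜ p, connectedComponentIn_subset_unboundedComponents hp,
    mem_connectedComponentIn hp.1, ?_, isPreconnected_connectedComponentIn⟩
  rw [connectedComponentIn_eq hq'p, ← connectedComponentIn_eq hq']
  exact mem_connectedComponentIn hp'.1

end UnboundedComponents

section WeakK5

variable {W : Type*}

/-- `H` has no weak `K₅`: five distinct vertices cannot be joined pairwise inside connected vertex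
sets such that the sets for independent pairs are disjoint. Unlike in a minor or a subdivision,
these sets may contain further ones of the five vertices. -/
def WeakK5Free (H : SimpleGraph W) : Prop :=
  ∀ ⦃p : Fin 5 → W⦄, Function.Injective p → ∀ E : Fin 5 → Fin 5 → Set W,
    (∀ i j, i < j → p i ∈ E i j ∧ p j ∈ E i j ∧ (H.induce (E i j)).Preconnected) →
      ¬ IndependentDisjoint E

end WeakK5

section NearNeighbors

variable {W : Type*} {H : SimpleGraph W} {Z Z' : Set W} {A Q : Finset W} {u v : W}

/-- `v` has a neighbour in `Z`. In the main induction `Z` takes the place of the unbounded face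
and the near vertices that of the outer cycle. -/
def Near (H : SimpleGraph W) (Z : Set W) (v : W) : Prop :=
  ∃ z ∈ Z, H.Adj z v

theorem Near.mono (h : Near H Z v) (hZ : Z ⊆ Z') : Near H Z' v :=
  h.imp fun _ hz => ⟨hZ hz.1, hz.2⟩

open Classical in
/-- The near neighbours of `v` in `A`. -/
def nearNeighbors (H : SimpleGraph W) (Z : Set W) (A : Finset W) (v : W) : Finset W :=
  {u ∈ A | H.Adj v u ∧ Near H Z u}

theorem mem_nearNeighbors : u ∈ nearNeighbors H Z A v ↔ u ∈ A ∧ H.Adj v u ∧ Near H Z u := by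
  simp [nearNeighbors]

theorem Near.connected_induce_insert (hv : Near H Z v) (hZ : (H.induce Z).Connected) :
    (H.induce (insert v Z)).Connected := by
  obtain ⟨z, hz, hzv⟩ := hv
  rw [← singleton_union]
  exact H.connected_induce_union .of_subsingleton hZ.preconnected rfl hz hzv.symm

variable [DecidableEq W]

theorem exists_isolated_part_of_not_preconnected {U : Finset W}
    (hU : ¬ (H.induce (U : Set W)).Preconnected) (hQ : H.IsClique (Q : Set W)) :
    ∃ K ⊂ U, K.Nonempty ∧ Q ∩ U ⊆ K ∧ ∀ a ∈ K, ∀ b ∈ U, H.Adj a b → b ∈ K := by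
  classical
  simp only [SimpleGraph.Preconnected, not_forall] at hU
  obtain ⟨s, t, hst⟩ := hU
  obtain ⟨r, hr⟩ : ∃ r : (U : Set W), ∀ q ∈ Q ∩ U, q = r ∨ H.Adj r q := by
    rcases (Q ∩ U).eq_empty_or_nonempty with hempty | ⟨r, hr⟩
    · exact ⟨s, by simp [hempty]⟩
    · rw [Finset.mem_inter] at hr
      refine ⟨⟨r, hr.2⟩, fun q hq => or_iff_not_imp_left.mpr fun hqr => ?_⟩
      exact hQ hr.1 (Finset.mem_inter.mp hq).1 (Ne.symm hqr)
  let K : Finset W := {w ∈ U | ∃ h : w ∈ (U : Set W), (H.induce (U : Set W)).Reachable r ⟨w, h⟩}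
  have hK (w : (U : Set W)) : ↑w ∈ K ↔ (H.induce (U : Set W)).Reachable r w := by
    simp [K, Finset.mem_coe.mp w.2]
  have hclosed : ∀ a ∈ K, ∀ b ∈ U, H.Adj a b → b ∈ K := by
    intro a ha b hb hab
    have haU : a ∈ U := (Finset.mem_filter.mp ha).1
    exact (hK ⟨b, hb⟩).mpr (((hK ⟨a, haU⟩).mp ha).trans (SimpleGraph.Adj.reachable hab))
  have hrK : ↑r ∈ K := (hK r).mpr .rfl
  refine ⟨K, (Finset.filter_subset _ _).ssubset_of_ne ?_, ⟨r, hrK⟩, ?_, hclosed⟩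
  · intro hKU
    have hKtop (w : (U : Set W)) : ↑w ∈ K := by rw [show K = U from hKU]; exact w.2
    exact hst (((hK s).mp (hKtop s)).symm.trans ((hK t).mp (hKtop t)))
  · intro q hq
    rcases hr q hq with rfl | hrq
    · exact hrK
    · exact hclosed r hrK q (Finset.mem_inter.mp hq).2 hrq

theorem compl_pair_eq_of_one_lt {i j : Fin 5} (hi : 1 < i) (hij : i < j) :
    ∃ m, 1 < m ∧ ({i, j}ᶜ : Set (Fin 5)) = {0, m, 1} := by
  simp only [Set.ext_iff, mem_compl_iff, mem_insert_iff, mem_singleton_iff]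
  decide +revert

/- The weak `K₅`: `p 0` is joined to the others through `Z`, `p 1` to the last three by edges, and
these three to each other through `A` without the remaining vertices. -/
theorem WeakK5Free.exists_not_preconnected (hH : WeakK5Free H) (hZ : (H.induce Z).Connected)
    (hZA : Disjoint Z (A : Set W)) {p : Fin 5 → W} (hp : Function.Injective p) (hp0 : p 0 ∈ Z)
    (hpA : ∀ j, 0 < j → p j ∈ A ∧ Near H Z (p j)) (hp1 : ∀ j, 1 < j → H.Adj (p 1) (p j)) :
    ∃ j, 1 < j ∧ ¬ (H.induce (↑(A \ {p j, p 1}) : Set W)).Preconnected := by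
  by_contra! hconn
  let E (i j : Fin 5) : Set W :=
    if i = 0 then insert (p j) Z else if i = 1 then {p 1, p j} else ↑A \ p '' {i, j}ᶜ
  have hE {i j : Fin 5} (hi : 1 < i) : E i j = ↑A \ p '' {i, j}ᶜ := by
    simp only [E, if_neg (show i ≠ 0 by omega), if_neg (show i ≠ 1 by omega)]
  refine hH hp E (fun i j hij => ?_) (fun i j k l hij hkl hik hjk hjl => ?_)
  · obtain rfl | rfl | hi : i = 0 ∨ i = 1 ∨ 1 < i := by omega
    · exact ⟨Or.inr hp0, Or.inl rfl, ((hpA j hij).2.connected_induce_insert hZ).preconnected⟩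
    · exact ⟨Or.inl rfl, Or.inr rfl, (H.induce_pair_connected_of_adj (hp1 j hij)).preconnected⟩
    · have hEij : E i j = ↑A \ p '' {i, j}ᶜ := hE hi
      obtain ⟨m, hm, hcompl⟩ := compl_pair_eq_of_one_lt hi hij
      have hEm : E i j = ↑(A \ {p m, p 1}) := by
        rw [hEij, hcompl]
        simp only [image_insert_eq, image_singleton, Finset.coe_sdiff, Finset.coe_insert,
          Finset.coe_singleton]
        exact sdiff_insert_of_notMem (disjoint_left.mp hZA hp0)
      refine ⟨?_, ?_, hEm ▸ hconn m hm⟩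
      · exact hEij ▸ ⟨(hpA i (by omega)).1, by simp [hp.mem_set_image]⟩
      · exact hEij ▸ ⟨(hpA j (by omega)).1, by simp [hp.mem_set_image]⟩
  · have hnot {m : Fin 5} (hmk : m ≠ k) (hml : m ≠ l) : p m ∉ (↑A \ p '' {k, l}ᶜ : Set W) :=
      fun h => h.2 (mem_image_of_mem p (by simp [hmk, hml]))
    obtain rfl | rfl : i = 0 ∨ i = 1 := by omega
    · change Disjoint (insert (p j) Z) (E k l)
      obtain rfl | hk : k = 1 ∨ 1 < k := by omega
      · change Disjoint (insert (p j) Z) {p 1, p l}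
        rw [disjoint_insert_left]
        refine ⟨by simp [hp.eq_iff, hjk, hjl], hZA.mono_right ?_⟩
        exact insert_subset (hpA 1 one_pos).1 (singleton_subset_iff.mpr (hpA l (by omega)).1)
      · rw [hE hk, disjoint_insert_left]
        exact ⟨hnot hjk hjl, hZA.mono_right sdiff_subset⟩
    · rw [hE hik, show E 1 j = {p 1, p j} from rfl, disjoint_insert_left, disjoint_singleton_left]
      exact ⟨hnot hik.ne (hik.trans hkl).ne, hnot hjk hjl⟩

theorem card_nearNeighbors_le_two (hH : WeakK5Free H) (hZ : (H.induce Z).Connected)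
    (hZA : Disjoint Z (A : Set W)) (hvA : v ∈ A) (hv : Near H Z v)
    (hA : ∀ u ∈ nearNeighbors H Z A v, (H.induce (↑(A \ {u, v}) : Set W)).Preconnected) :
    (nearNeighbors H Z A v).card ≤ 2 := by
  by_contra! hcard
  obtain ⟨q, hqN⟩ : ∃ q : Fin 3 ↪ W, range q ⊆ nearNeighbors H Z A v :=
    Function.Embedding.exists_of_card_le_finset ((Fintype.card_fin 3).trans_le hcard)
  have hq (m : Fin 3) : q m ∈ A ∧ H.Adj v (q m) ∧ Near H Z (q m) :=
    mem_nearNeighbors.mp (hqN (mem_range_self m))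
  obtain ⟨z, hz, -⟩ := id hv
  have hzA {u : W} (hu : u ∈ A) : u ≠ z := fun h => disjoint_left.mp hZA hz (h ▸ hu)
  obtain ⟨j, hj, hconn⟩ := hH.exists_not_preconnected (p := Fin.cons z (Fin.cons v q)) hZ hZA
    (by simp [Fin.cons_injective_iff, (hzA hvA).symm, hzA (hq _).1, (hq _).2.1.ne', q.injective])
    hz
    (by simp [Fin.forall_fin_succ (n := 4), Fin.forall_fin_succ (n := 3), hvA, hv, hq])
    (by simp [Fin.forall_fin_succ (n := 4), Fin.forall_fin_succ (n := 3), hq])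
  obtain ⟨m, rfl⟩ : ∃ m : Fin 3, j = m.succ.succ := by
    clear hconn
    decide +revert
  exact hconn (hA (q m) (hqN (mem_range_self m)))

end NearNeighbors

section ListColoring

variable {W α : Type*} {H : SimpleGraph W} {Z Z' : Set W} {A B Q T : Finset W} {u v : W}
  {L L' : W → Finset α} {S : Finset α}

/-- The subgraph of `H` induced by `A` has a proper colouring from the lists `L`. -/
def ColorableOn (H : SimpleGraph W) (A : Finset W) (L : W → Finset α) : Prop :=
  ∃ c : W → α, (∀ v ∈ A, c v ∈ L v) ∧ ∀ u ∈ A, ∀ v ∈ A, H.Adj u v → c u ≠ c v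

theorem ColorableOn.mono (h : ColorableOn H A L) (hL : ∀ v ∈ A, L v ⊆ L' v) :
    ColorableOn H A L' := by
  obtain ⟨c, hc, hadj⟩ := h
  exact ⟨c, fun v hv => hL v hv (hc v hv), hadj⟩

/-- The list of `v` has the size required of a vertex without prescribed colour: three if `v` is
near `Z`, and five otherwise. -/
def LargeList (H : SimpleGraph W) (Z : Set W) (L : W → Finset α) (v : W) : Prop :=
  5 ≤ (L v).card ∨ Near H Z v ∧ 3 ≤ (L v).card

theorem LargeList.three_le_card (h : LargeList H Z L v) : 3 ≤ (L v).card :=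
  h.elim (le_trans (by norm_num)) And.right

/-- The situation of Thomassen's induction: the vertices in `A` are to be coloured from the lists
`L`, where the colours of the near vertices in the clique `Q` are prescribed. -/
structure Config (H : SimpleGraph W) (Z : Set W) (A Q : Finset W) (L : W → Finset α) : Prop where
  connected : (H.induce Z).Connected
  disjoint : Disjoint Z (A : Set W)
  subset : Q ⊆ A
  isClique : H.IsClique (Q : Set W)
  near : ∀ q ∈ Q, Near H Z q
  card_eq_one : ∀ q ∈ Q, (L q).card = 1
  pairwiseDisjoint : (Q : Set W).PairwiseDisjoint L
  largeList : ∀ v ∈ A, v ∉ Q → LargeList H Z L v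

/-- Every configuration on the vertices `A` of `H` with colours in `α` is colourable. -/
def Solvable (α : Type*) (H : SimpleGraph W) (A : Finset W) : Prop :=
  ∀ ⦃Z : Set W⦄ ⦃Q : Finset W⦄ ⦃L : W → Finset α⦄, Config H Z A Q L → ColorableOn H A L

theorem Config.mono_right (h : Config H Z A Q L) (hBA : B ⊆ A) (hQB : Q ⊆ B) :
    Config H Z B Q L :=
  { h with
    disjoint := h.disjoint.mono_right (Finset.coe_subset.mpr hBA)
    subset := hQB
    largeList := fun v hv => h.largeList v (hBA hv) }

open Classical in
/-- The lists after the colours in `S` have been reserved for `v`: they are removed from the lists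
of those neighbours of `v` that are not near `Z`. -/
def prunedLists (H : SimpleGraph W) (Z : Set W) (L : W → Finset α) (v : W) (S : Finset α) (u : W) :
    Finset α :=
  if H.Adj v u ∧ ¬ Near H Z u then L u \ S else L u

theorem prunedLists_subset : prunedLists H Z L v S u ⊆ L u := by
  classical
  unfold prunedLists
  split_ifs
  · exact Finset.sdiff_subset
  · rfl

theorem prunedLists_of_near (hu : Near H Z u) : prunedLists H Z L v S u = L u :=
  if_neg fun h => h.2 hu

theorem LargeList.prune (h : LargeList H Z L u) (hS : S.card ≤ 2) (hv : v ∈ Z')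
    (hZ : Near H Z u → Near H Z' u) : LargeList H Z' (prunedLists H Z L v S) u := by
  classical
  by_cases hu : H.Adj v u ∧ ¬ Near H Z u
  · have hL : 5 ≤ (L u).card := h.resolve_right fun h' => hu.2 h'.1
    have hsdiff : (L u).card - S.card ≤ (L u \ S).card := Finset.le_card_sdiff S (L u)
    refine Or.inr ⟨⟨v, hv, hu.1⟩, ?_⟩
    rw [prunedLists, if_pos hu]
    omega
  · rw [LargeList, prunedLists, if_neg hu]
    exact h.imp_right (And.imp_left hZ)

theorem Config.colorableOn_of_singleton (h : Config H Z A ∅ L) (hvA : v ∈ A) (hv : Near H Z v)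
    (hsing : ∀ L' : W → Finset α, Config H Z A {v} L' → ColorableOn H A L') :
    ColorableOn H A L := by
  classical
  obtain ⟨d, hd⟩ : (L v).Nonempty := Finset.card_pos.mp
    (three_pos.trans_le (h.largeList v hvA (Finset.notMem_empty v)).three_le_card)
  refine (hsing (Function.update L v {d}) { h with
    subset := Finset.singleton_subset_iff.mpr hvA
    isClique := by simp
    near := by simpa using hv
    card_eq_one := by simp
    pairwiseDisjoint := by simp
    largeList := fun u hu huv => ?_ }).mono fun u _ => ?_
  · rw [LargeList, Function.update_of_ne (by simpa using huv)]
    exact h.largeList u hu (Finset.notMem_empty u)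
  · rcases eq_or_ne u v with rfl | huv
    · simpa using hd
    · rw [Function.update_of_ne huv]

variable [DecidableEq W]

theorem Config.prune (h : Config H Z A Q L) (hS : S.card ≤ 2) (hZ' : (H.induce Z').Connected)
    (hdisj : Disjoint Z' (A.erase v : Set W)) (hv : v ∈ Z')
    (hnear : ∀ u ∈ A, Near H Z u → Near H Z' u) :
    Config H Z' (A.erase v) (Q.erase v) (prunedLists H Z L v S) where
  connected := hZ'
  disjoint := hdisj
  subset := Finset.erase_subset_erase v h.subset
  isClique := h.isClique.subset (Finset.erase_subset v Q)
  near q hq := by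
    have hq := Finset.mem_of_mem_erase hq
    exact hnear q (h.subset hq) (h.near q hq)
  card_eq_one q hq := by
    have hq := Finset.mem_of_mem_erase hq
    rw [prunedLists_of_near (h.near q hq), h.card_eq_one q hq]
  pairwiseDisjoint := (h.pairwiseDisjoint.subset (Finset.erase_subset v Q)).mono
    fun _ => prunedLists_subset
  largeList u hu huQ := by
    rw [Finset.mem_erase] at hu huQ
    exact (h.largeList u hu.2 fun huQ' => huQ ⟨hu.1, huQ'⟩).prune hS hv (hnear u hu.2)

theorem ColorableOn.of_prune (h : ColorableOn H (A.erase v) (prunedLists H Z L v S)) (hS : S ⊆ L v)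
    (hTS : T.card < S.card)
    (hT : ∀ u ∈ nearNeighbors H Z A v, u ∉ T → Disjoint S (L u)) : ColorableOn H A L := by
  classical
  obtain ⟨c, hcL, hcadj⟩ := h
  obtain ⟨d, hdS, hdT⟩ := Finset.exists_mem_notMem_of_card_lt_card
    (Finset.card_image_le.trans_lt hTS : (T.image c).card < S.card)
  have hd {u : W} (hu : u ∈ A) (hvu : H.Adj v u) : c u ≠ d := by
    rintro rfl
    have hcu := hcL u (Finset.mem_erase.mpr ⟨hvu.ne', hu⟩)
    by_cases hun : Near H Z u
    · have huT : u ∉ T := fun huT => hdT (Finset.mem_image_of_mem c huT)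
      exact Finset.disjoint_left.mp (hT u (mem_nearNeighbors.mpr ⟨hu, hvu, hun⟩) huT) hdS
        (prunedLists_subset hcu)
    · rw [prunedLists, if_pos ⟨hvu, hun⟩] at hcu
      exact (Finset.mem_sdiff.mp hcu).2 hdS
  refine ⟨Function.update c v d, fun u hu => ?_, fun u hu w hw huw => ?_⟩
  · rcases eq_or_ne u v with rfl | huv
    · simpa using hS hdS
    · simpa [huv] using prunedLists_subset (hcL u (Finset.mem_erase.mpr ⟨huv, hu⟩))
  · rcases eq_or_ne u v with rfl | huv
    · simpa [huw.ne'] using (hd hw huw).symm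
    · rcases eq_or_ne w v with rfl | hwv
      · simpa [huv] using hd hu huw.symm
      · simpa [huv, hwv] using
          hcadj u (Finset.mem_erase.mpr ⟨huv, hu⟩) w (Finset.mem_erase.mpr ⟨hwv, hw⟩) huw

theorem Config.colorableOn_of_erase (h : Config H Z A Q L) (ih : Solvable α H (A.erase v))
    (hv : Near H Z v) (hS : S ⊆ L v) (hS2 : S.card ≤ 2) (hTS : T.card < S.card)
    (hT : ∀ u ∈ nearNeighbors H Z A v, u ∉ T → Disjoint S (L u)) : ColorableOn H A L := by
  refine .of_prune (ih (h.prune hS2 (hv.connected_induce_insert h.connected) ?_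
    (mem_insert v Z) fun u _ hu => hu.mono (subset_insert v Z))) hS hTS hT
  rw [disjoint_insert_left]
  exact ⟨by simp, h.disjoint.mono_right (Finset.coe_subset.mpr (Finset.erase_subset v A))⟩

theorem Config.colorableOn_of_nearNeighbors_subset (h : Config H Z A Q L)
    (ih : Solvable α H (A.erase v)) (hvQ : v ∈ Q) (hv : nearNeighbors H Z A v ⊆ Q) :
    ColorableOn H A L := by
  have hL : (L v).card = 1 := h.card_eq_one v hvQ
  refine h.colorableOn_of_erase ih (h.near v hvQ) subset_rfl (by omega) (T := ∅)
    (by simp [hL]) fun u hu _ => ?_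
  exact h.pairwiseDisjoint hvQ (hv hu) (mem_nearNeighbors.mp hu).2.1.ne

theorem Config.colorableOn_of_forall_not_near (h : Config H Z A ∅ L)
    (ih : Solvable α H (A.erase v)) (hvA : v ∈ A) (hA : ∀ u ∈ A, ¬ Near H Z u) :
    ColorableOn H A L := by
  obtain ⟨d, hd⟩ : (L v).Nonempty := Finset.card_pos.mp
    (three_pos.trans_le (h.largeList v hvA (Finset.notMem_empty v)).three_le_card)
  refine .of_prune (ih (h.prune (Z' := {v}) (S := {d}) (by simp) ?_ (by simp) rfl ?_))
    (Finset.singleton_subset_iff.mpr hd) (T := ∅) (by simp) ?_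
  · exact ⟨.of_subsingleton⟩
  · exact fun u hu hun => (hA u hu hun).elim
  · exact fun u hu => (hA u (mem_nearNeighbors.mp hu).1 (mem_nearNeighbors.mp hu).2.2).elim

/-- The lists after the colours of the vertices in `P` have been fixed as in `c`. -/
def fixColors (L : W → Finset α) (P : Finset W) (c : W → α) (w : W) : Finset α :=
  if w ∈ P then {c w} else L w

theorem Config.fixColors_pair (h : Config H Z A Q L) (hBA : B ⊆ A) (hu : u ∈ B) (hv : v ∈ B)
    (huv : H.Adj u v) (hun : Near H Z u) (hvn : Near H Z v) (hQB : Q ∩ B ⊆ {u, v})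
    {c : W → α} (hc : c u ≠ c v) : Config H Z B {u, v} (fixColors L {u, v} c) where
  connected := h.connected
  disjoint := h.disjoint.mono_right (Finset.coe_subset.mpr hBA)
  subset := Finset.insert_subset hu (Finset.singleton_subset_iff.mpr hv)
  isClique := by simp [huv]
  near := by simp [hun, hvn]
  card_eq_one := by simp [fixColors]
  pairwiseDisjoint := by simp [Set.pairwiseDisjoint_insert, fixColors, hc]
  largeList w hw hwuv := by
    rw [LargeList, fixColors, if_neg hwuv]
    exact h.largeList w (hBA hw) fun hwQ => hwuv (hQB (Finset.mem_inter.mpr ⟨hwQ, hw⟩))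

theorem ColorableOn.of_fixColors {K P : Finset W} {c : W → α}
    (h : ColorableOn H (A \ K) (fixColors L P c)) (hcL : ∀ v ∈ K ∪ P, c v ∈ L v)
    (hcadj : ∀ u ∈ K ∪ P, ∀ v ∈ K ∪ P, H.Adj u v → c u ≠ c v) (hPA : P ⊆ A \ K)
    (hK : ∀ u ∈ K, ∀ v ∈ A, H.Adj u v → v ∈ K ∪ P) : ColorableOn H A L := by
  obtain ⟨c', hcL', hcadj'⟩ := h
  have hcP {v : W} (hv : v ∈ P) : c' v = c v := by
    simpa [fixColors, hv] using hcL' v (hPA hv)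
  have hcross {u v : W} (hu : u ∈ K) (hvA : v ∈ A) (hvK : v ∉ K) (huv : H.Adj u v) :
      c u ≠ c' v := by
    have hv := hK u hu v hvA huv
    rw [hcP ((Finset.mem_union.mp hv).resolve_left hvK)]
    exact hcadj u (Finset.mem_union_left P hu) v hv huv
  refine ⟨fun v => if v ∈ K then c v else c' v, fun v hv => ?_, fun u hu v hv huv => ?_⟩
  · dsimp only
    split_ifs with hvK
    · exact hcL v (Finset.mem_union_left P hvK)
    · by_cases hvP : v ∈ P
      · exact hcP hvP ▸ hcL v (Finset.mem_union_right K hvP)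
      · simpa [fixColors, hvP] using hcL' v (Finset.mem_sdiff.mpr ⟨hv, hvK⟩)
  · dsimp only
    split_ifs with huK hvK hvK
    · exact hcadj u (Finset.mem_union_left P huK) v (Finset.mem_union_left P hvK) huv
    · exact hcross huK hv hvK huv
    · exact (hcross hvK hu huK huv.symm).symm
    · exact hcadj' u (Finset.mem_sdiff.mpr ⟨hu, huK⟩) v (Finset.mem_sdiff.mpr ⟨hv, hvK⟩) huv

theorem Config.colorableOn_of_chord (h : Config H Z A Q L) (ih : ∀ B ⊂ A, Solvable α H B)
    (hu : u ∈ A) (hv : v ∈ A) (huv : H.Adj u v) (hun : Near H Z u) (hvn : Near H Z v)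
    (hsep : ¬ (H.induce (↑(A \ {u, v}) : Set W)).Preconnected) : ColorableOn H A L := by
  obtain ⟨K, hKU, hK0, hQK, hK⟩ := exists_isolated_part_of_not_preconnected hsep h.isClique
  have hPA : {u, v} ⊆ A := Finset.insert_subset hu (Finset.singleton_subset_iff.mpr hv)
  have hKA : K ⊆ A := hKU.1.trans Finset.sdiff_subset
  have hPK : {u, v} ⊆ A \ K := Finset.subset_sdiff.mpr
    ⟨hPA, Finset.disjoint_of_subset_right hKU.1 Finset.disjoint_sdiff⟩
  have hQ {q : W} (hq : q ∈ Q) : q ∈ K ∪ {u, v} := by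
    by_cases hqP : q ∈ ({u, v} : Finset W)
    · exact Finset.mem_union_right K hqP
    · exact Finset.mem_union_left _
        (hQK (Finset.mem_inter.mpr ⟨hq, Finset.mem_sdiff.mpr ⟨h.subset hq, hqP⟩⟩))
  have hKPA : K ∪ {u, v} ⊂ A := by
    obtain ⟨w, hw, hwK⟩ := Finset.exists_of_ssubset hKU
    rw [Finset.mem_sdiff] at hw
    exact Finset.ssubset_iff_of_subset (Finset.union_subset hKA hPA) |>.mpr
      ⟨w, hw.1, by simpa [hwK] using hw.2⟩
  obtain ⟨c, hcL, hcadj⟩ := ih _ hKPA (h.mono_right hKPA.1 fun q => hQ)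
  have hcfg : Config H Z (A \ K) {u, v} (fixColors L {u, v} c) := by
    refine h.fixColors_pair Finset.sdiff_subset (hPK (by simp)) (hPK (by simp)) huv hun hvn
      (fun q hq => ?_) (hcadj u (by simp) v (by simp) huv)
    rw [Finset.mem_inter, Finset.mem_sdiff] at hq
    exact (Finset.mem_union.mp (hQ hq.1)).resolve_left hq.2.2
  refine .of_fixColors (ih _ (Finset.sdiff_ssubset hKA hK0) hcfg) hcL hcadj hPK ?_
  intro a ha b hb hab
  by_cases hbP : b ∈ ({u, v} : Finset W)
  · exact Finset.mem_union_right K hbP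
  · exact Finset.mem_union_left _ (hK a ha b (Finset.mem_sdiff.mpr ⟨hb, hbP⟩) hab)

end ListColoring

section Induction

variable {W α : Type*} {H : SimpleGraph W} {Z : Set W} {A Q : Finset W} {u v : W}
  {L : W → Finset α}

theorem Config.colorableOn_of_adj (h : Config H Z A Q L) (hH : WeakK5Free H)
    (ih : ∀ B ⊂ A, Solvable α H B) (huQ : u ∈ Q) (hvA : v ∈ A) (hvQ : v ∉ Q) (hv : Near H Z v)
    (huv : H.Adj u v) : ColorableOn H A L := by
  classical
  by_cases hconn : ∀ w ∈ nearNeighbors H Z A v, (H.induce (↑(A \ {w, v}) : Set W)).Preconnected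
  · have hN : (nearNeighbors H Z A v).card ≤ 2 :=
      card_nearNeighbors_le_two hH h.connected h.disjoint hvA hv hconn
    have huN : u ∈ nearNeighbors H Z A v :=
      mem_nearNeighbors.mpr ⟨h.subset huQ, huv.symm, h.near u huQ⟩
    have hLuv : 2 ≤ (L v \ L u).card := by
      have hLv := (h.largeList v hvA hvQ).three_le_card
      have hsdiff := Finset.le_card_sdiff (L u) (L v)
      have hLu := h.card_eq_one u huQ
      omega
    obtain ⟨S, hS, hS2⟩ := Finset.exists_subset_card_eq hLuv
    refine h.colorableOn_of_erase (ih _ (Finset.erase_ssubset hvA)) hv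
      (hS.trans Finset.sdiff_subset) hS2.le (T := (nearNeighbors H Z A v).erase u) ?_ ?_
    · rw [Finset.card_erase_of_mem huN]
      omega
    · intro w hw hwT
      obtain rfl : w = u := by simpa [hw] using hwT
      exact Finset.disjoint_of_subset_left hS Finset.sdiff_disjoint
  · push Not at hconn
    obtain ⟨w, hw, hsep⟩ := hconn
    obtain ⟨hwA, hvw, hwn⟩ := mem_nearNeighbors.mp hw
    exact h.colorableOn_of_chord ih hwA hvA hvw.symm hwn hv hsep

theorem Config.colorableOn_of_mem (h : Config H Z A Q L) (hH : WeakK5Free H)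
    (ih : ∀ B ⊂ A, Solvable α H B) (hu : u ∈ Q) : ColorableOn H A L := by
  classical
  by_cases hN : nearNeighbors H Z A u ⊆ Q
  · exact h.colorableOn_of_nearNeighbors_subset (ih _ (Finset.erase_ssubset (h.subset hu))) hu hN
  · obtain ⟨v, hv, hvQ⟩ := Finset.not_subset.mp hN
    obtain ⟨hvA, huv, hvn⟩ := mem_nearNeighbors.mp hv
    exact h.colorableOn_of_adj hH ih hu hvA hvQ hvn huv

theorem WeakK5Free.solvable [Nonempty α] (hH : WeakK5Free H) (A : Finset W) :
    Solvable α H A := by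
  classical
  induction A using Finset.strongInduction with
  | H A ih =>
    intro Z Q L h
    obtain rfl | ⟨u, hu⟩ := Q.eq_empty_or_nonempty
    · by_cases hnear : ∃ v ∈ A, Near H Z v
      · obtain ⟨v, hvA, hv⟩ := hnear
        exact h.colorableOn_of_singleton hvA hv fun L' h' =>
          h'.colorableOn_of_mem hH ih (Finset.mem_singleton_self v)
      · push Not at hnear
        obtain rfl | ⟨v, hvA⟩ := A.eq_empty_or_nonempty
        · exact ⟨fun _ => Classical.arbitrary α, by simp⟩
        · exact h.colorableOn_of_forall_not_near (ih _ (Finset.erase_ssubset hvA)) hvA hnear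
    · exact h.colorableOn_of_mem hH ih hu

end Induction

section Apex

variable {V W α : Type*}

/-- The graph `G` with a new vertex `none` that is adjacent to the vertices in `S`. -/
def apex (G : SimpleGraph V) (S : Set V) : SimpleGraph (Option V) where
  Adj
    | none, none => False
    | none, some v => v ∈ S
    | some u, none => u ∈ S
    | some u, some v => G.Adj u v
  symm := ⟨by rintro (_ | u) (_ | v) h; exacts [h, h, h, G.adj_symm h]⟩
  loopless := ⟨by rintro (_ | v) h; exacts [h, G.irrefl h]⟩

theorem config_apex [Fintype V] {G : SimpleGraph V} {S : Set V} {Q : Finset V}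
    {L : V → Finset α} (hQ : G.IsClique (Q : Set V)) (hQS : ∀ q ∈ Q, q ∈ S)
    (hL5 : ∀ v ∉ S, 5 ≤ (L v).card) (hL3 : ∀ v ∈ S, v ∉ Q → 3 ≤ (L v).card)
    (hLQ : ∀ q ∈ Q, (L q).card = 1) (hLinj : (Q : Set V).InjOn L) :
    Config (apex G S) {none} (Finset.univ.map .some) (Q.map .some) fun v => v.elim ∅ L where
  connected := ⟨.of_subsingleton⟩
  disjoint := by simp
  subset := Finset.map_subset_map.mpr (Finset.subset_univ Q)
  isClique := by
    rw [Finset.coe_map]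
    rintro _ ⟨u, hu, rfl⟩ _ ⟨v, hv, rfl⟩ huv
    exact hQ hu hv (ne_of_apply_ne some huv)
  near := by
    simp only [Finset.forall_mem_map]
    exact fun q hq => ⟨none, rfl, hQS q hq⟩
  card_eq_one := by simpa using hLQ
  pairwiseDisjoint := by
    rw [Finset.coe_map]
    rintro _ ⟨u, hu, rfl⟩ _ ⟨v, hv, rfl⟩ huv
    obtain ⟨a, ha⟩ := Finset.card_eq_one.mp (hLQ u hu)
    obtain ⟨b, hb⟩ := Finset.card_eq_one.mp (hLQ v hv)
    have hab : L u ≠ L v := hLinj.ne hu hv (ne_of_apply_ne some huv)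
    simpa [Function.onFun, ha, hb] using hab
  largeList := by
    rintro (_ | v) hv hvQ
    · simp at hv
    · by_cases hvS : v ∈ S
      · exact Or.inr ⟨⟨none, rfl, hvS⟩, hL3 v hvS fun hvQ' => hvQ (Finset.mem_map_of_mem _ hvQ')⟩
      · exact Or.inl (hL5 v hvS)

theorem weakK5Free_of_joinedIn {H : SimpleGraph W} {pos : W → ℝ × ℝ} {K : W → W → Set (ℝ × ℝ)}
    (hK : ∀ u v, H.Adj u v → JoinedIn (K u v) (pos u) (pos v))
    (hdisj : ∀ u v u' v', H.Adj u v → H.Adj u' v' → Disjoint ({u, v} : Set W) {u', v'} →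
      Disjoint (K u v) (K u' v')) : WeakK5Free H := by
  intro p hp E hE hEdisj
  let M (U : Set W) : Set (ℝ × ℝ) := {x | ∃ u ∈ U, ∃ v ∈ U, H.Adj u v ∧ x ∈ K u v}
  have hM {U : Set W} {u v : U} (huv : Relation.TransGen (H.induce U).Adj u v) :
      JoinedIn (M U) (pos u) (pos v) := by
    have hadj {u v : U} (huv : H.Adj u v) : JoinedIn (M U) (pos u) (pos v) :=
      (hK u v huv).mono fun x hx => ⟨u, u.2, v, v.2, huv, hx⟩
    induction huv with
    | single huv => exact hadj huv
    | tail _ huv ih => exact ih.trans (hadj huv)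
  refine not_independentDisjoint_of_joinedIn (p := pos ∘ p) (K := fun i j => M (E i j))
    (fun i j hij => ?_) (fun i j k l hij hkl hik hjk hjl => ?_)
  · obtain ⟨hi, hj, hconn⟩ := hE i j hij
    have hreach := (SimpleGraph.reachable_iff_reflTransGen _ _).mp (hconn ⟨p i, hi⟩ ⟨p j, hj⟩)
    refine hM ((Relation.reflTransGen_iff_eq_or_transGen.mp hreach).resolve_left fun hji => ?_)
    exact hij.ne' (hp (congrArg Subtype.val hji))
  · rw [disjoint_left]
    rintro x ⟨u, hu, v, hv, huv, hx⟩ ⟨u', hu', v', hv', huv', hx'⟩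
    refine disjoint_left.mp (hdisj u v u' v' huv huv' ?_) hx hx'
    exact (hEdisj hij hkl hik hjk hjl).mono (pair_subset hu hv) (pair_subset hu' hv')

end Apex

end Thomassen

namespace Drawing

open Thomassen

variable {V : Type} {G : SimpleGraph V} (D : Drawing G) {u v u' v' w : V} {p z : ℝ × ℝ}

theorem pos_mem_arcSet_iff (h : G.Adj u v) : D.pos w ∈ D.arcSet h ↔ w = u ∨ w = v := by
  constructor
  · rintro ⟨t, ht⟩
    rcases D.arc_vertex h t w ht with rfl | rfl
    · exact Or.inl (D.pos_inj (ht.symm.trans (D.arc h).source))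
    · exact Or.inr (D.pos_inj (ht.symm.trans (D.arc h).target))
  · rintro (rfl | rfl)
    exacts [(D.arc h).source_mem_range, (D.arc h).target_mem_range]

theorem eq_pos_or_mem_arcInterior_of_mem_arcSet {h : G.Adj u v} (hp : p ∈ D.arcSet h) :
    p = D.pos u ∨ p = D.pos v ∨ p ∈ D.arcInterior h := by
  obtain ⟨t, rfl⟩ := hp
  rcases eq_or_ne t 0 with rfl | ht0
  · exact Or.inl (D.arc h).source
  rcases eq_or_ne t 1 with rfl | ht1
  · exact Or.inr (Or.inl (D.arc h).target)
  · exact Or.inr (Or.inr (mem_image_of_mem _ ⟨ht0, ht1⟩))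

theorem arcSet_subset_graphSet (h : G.Adj u v) : D.arcSet h ⊆ D.graphSet :=
  fun _ hp => Or.inr (mem_iUnion_of_mem u (mem_iUnion_of_mem v (mem_iUnion_of_mem h hp)))

theorem isCompact_arcSet (h : G.Adj u v) : IsCompact (D.arcSet h) :=
  isCompact_range (D.arc h).continuous

theorem isCompact_graphSet [Finite V] : IsCompact D.graphSet :=
  (finite_range D.pos).isCompact.union <| isCompact_iUnion fun _ => isCompact_iUnion fun _ =>
    isCompact_iUnion fun h => D.isCompact_arcSet h

variable {D}

theorem IsPlane.disjoint_arcSet (hD : D.IsPlane) (h : G.Adj u v) (h' : G.Adj u' v')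
    (hne : Disjoint ({u, v} : Set V) {u', v'}) : Disjoint (D.arcSet h) (D.arcSet h') := by
  have hends {w : V} (hw : w = u ∨ w = v) : D.pos w ∉ D.arcSet h' := fun hw' =>
    disjoint_left.mp hne hw ((D.pos_mem_arcSet_iff h').mp hw')
  rw [disjoint_left]
  intro p hp hp'
  rcases D.eq_pos_or_mem_arcInterior_of_mem_arcSet hp with rfl | rfl | hpi
  · exact hends (Or.inl rfl) hp'
  · exact hends (Or.inr rfl) hp'
  rcases D.eq_pos_or_mem_arcInterior_of_mem_arcSet hp' with rfl | rfl | hpi'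
  · exact disjoint_right.mp hne (Or.inl rfl) ((D.pos_mem_arcSet_iff h).mp hp)
  · exact disjoint_right.mp hne (Or.inr rfl) ((D.pos_mem_arcSet_iff h).mp hp)
  refine hD p ⟨u, v, u', v', h, h', fun heq => ?_, hpi, hpi'⟩
  have huv : u ∈ s(u', v') := heq ▸ Sym2.mem_mk_left u v
  exact disjoint_left.mp hne (Or.inl rfl) (Sym2.mem_iff.mp huv)

variable (D) in
theorem exists_ball_disjoint_arcSet [Finite V] (v : V) :
    ∃ ε > 0, ∀ (a b : V) (h : G.Adj a b), v ∉ ({a, b} : Set V) →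
      Disjoint (Metric.ball (D.pos v) ε) (D.arcSet h) := by
  let C : Set (ℝ × ℝ) := ⋃ (a : V) (b : V) (h : G.Adj a b ∧ v ∉ ({a, b} : Set V)), D.arcSet h.1
  have hC : IsClosed C := (isCompact_iUnion fun _ => isCompact_iUnion fun _ =>
    isCompact_iUnion fun h => D.isCompact_arcSet h.1).isClosed
  have hvC : D.pos v ∈ Cᶜ := by
    simp only [C, mem_compl_iff, mem_iUnion, not_exists, D.pos_mem_arcSet_iff]
    exact fun a b h => h.2
  obtain ⟨ε, hε, hball⟩ := Metric.isOpen_iff.mp hC.isOpen_compl _ hvC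
  refine ⟨ε, hε, fun a b h hv => (disjoint_compl_left.mono_left hball).mono_right ?_⟩
  exact fun p hp => mem_iUnion_of_mem a (mem_iUnion_of_mem b (mem_iUnion_of_mem ⟨h, hv⟩ hp))

theorem OnOuter.exists_joinedIn [Finite V] (hv : D.OnOuter v) (hz : z ∈ D.outerFace) :
    ∃ P, JoinedIn P z (D.pos v) ∧
      ∀ (a b : V) (h : G.Adj a b), v ∉ ({a, b} : Set V) → Disjoint P (D.arcSet h) := by
  obtain ⟨ε, hε, hball⟩ := D.exists_ball_disjoint_arcSet v
  have hopen : IsOpen D.outerFace := isOpen_unboundedComponents D.isCompact_graphSet.isClosed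
  have hconn : IsPreconnected D.outerFace :=
    isPreconnected_unboundedComponents (by rw [rank_prod', Module.rank_self]; norm_num)
      D.isCompact_graphSet.isBounded
  obtain ⟨q, hq, hvq⟩ := Metric.mem_closure_iff.mp (frontier_subset_closure hv) ε hε
  have hP : IsConnected (D.outerFace ∪ Metric.ball (D.pos v) ε) :=
    IsConnected.union ⟨q, hq, Metric.mem_ball'.mpr hvq⟩ ⟨⟨z, hz⟩, hconn⟩
      (Metric.isConnected_ball hε)
  refine ⟨_, ((hopen.union Metric.isOpen_ball).isConnected_iff_isPathConnected.mp hP).joinedIn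
    z (Or.inl hz) _ (Or.inr (Metric.mem_ball_self hε)), fun a b h hab => ?_⟩
  refine Disjoint.union_left ?_ (hball a b h hab)
  exact disjoint_left.mpr fun p hp hpa => hp.1 (D.arcSet_subset_graphSet h hpa)

theorem IsPlane.weakK5Free_apex [Finite V] (hD : D.IsPlane) :
    WeakK5Free (apex G {v | D.OnOuter v}) := by
  obtain ⟨z, hz⟩ : ∃ z, ∀ v, D.OnOuter v → z ∈ D.outerFace := by
    rcases D.outerFace.eq_empty_or_nonempty with hempty | ⟨z, hz⟩
    · exact ⟨0, fun v hv => by simp [OnOuter, hempty] at hv⟩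
    · exact ⟨z, fun _ _ => hz⟩
  choose! P hPz hP using fun v hv => OnOuter.exists_joinedIn (D := D) (v := v) hv (hz v hv)
  let K : Option V → Option V → Set (ℝ × ℝ)
    | none, none => ∅
    | none, some v => P v
    | some u, none => P u
    | some u, some v => {p | ∃ h : G.Adj u v, p ∈ D.arcSet h}
  have hPK {v a b : V} {s : Set (Option V)} (hv : D.OnOuter v) (hab : G.Adj a b)
      (hs : Disjoint s {some a, some b}) (hvs : some v ∈ s) :
      Disjoint (P v) (K (some a) (some b)) := by
    refine (hP v hv a b hab fun hvab => ?_).mono_right fun p ⟨_, hp⟩ => hp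
    exact disjoint_left.mp hs hvs (by simpa using hvab)
  refine weakK5Free_of_joinedIn (pos := fun a => a.elim z D.pos) (K := K) ?_ ?_
  · rintro (_ | u) (_ | v) h
    · exact h.elim
    · exact hPz v h
    · exact (hPz u h).symm
    · exact ⟨D.arc h, fun t => ⟨h, mem_range_self t⟩⟩
  · rintro (_ | u) (_ | v) (_ | u') (_ | v') h h' hne
    case none.some.some.some => exact hPK h h' hne (Or.inr rfl)
    case some.none.some.some => exact hPK h h' hne (Or.inl rfl)
    case some.some.none.some => exact (hPK h' h hne.symm (Or.inr rfl)).symm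
    case some.some.some.none => exact (hPK h' h hne.symm (Or.inl rfl)).symm
    case some.some.some.some =>
      have harcs := hD.disjoint_arcSet h h' (by simpa using hne)
      exact disjoint_left.mpr fun p ⟨_, hp⟩ ⟨_, hp'⟩ => disjoint_left.mp harcs hp hp'
    all_goals first | exact h.elim | exact h'.elim | simp at hne

theorem BoundsOuter.onOuter_iff {r : V} {F : G.Walk r r} (hF : D.BoundsOuter F) :
    D.OnOuter v ↔ v ∈ F.support := by
  rw [OnOuter, hF]
  constructor
  · rintro (⟨w, hw, hwv⟩ | hv)
    · exact D.pos_inj hwv ▸ hw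
    · obtain ⟨d, hd, hv⟩ := mem_iUnion₂.mp hv
      obtain rfl | rfl := (D.pos_mem_arcSet_iff d.adj).mp hv
      exacts [F.dart_fst_mem_support_of_mem_darts hd, F.dart_snd_mem_support_of_mem_darts hd]
  · exact fun hv => Or.inl ⟨v, hv, rfl⟩

end Drawing

theorem planar_choosable_precolored_edge_general {V : Type} [Finite V] (G : SimpleGraph V)
    (D : Drawing G) (hplane : D.IsPlane) (Q : Finset V)
    (hQ : G.IsClique (Q : Set V)) (hQouter : ∀ q ∈ Q, D.OnOuter q) (L : V → Finset ℕ)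
    (hL5 : ∀ v, ¬ D.OnOuter v → 5 ≤ (L v).card)
    (hL3 : ∀ v, D.OnOuter v → v ∉ Q → 3 ≤ (L v).card)
    (hLQ : ∀ q ∈ Q, (L q).card = 1) (hLinj : (Q : Set V).InjOn L) : ListColorable G L := by
  have := Fintype.ofFinite V
  obtain ⟨c, hcL, hcadj⟩ := hplane.weakK5Free_apex.solvable _
    (Thomassen.config_apex hQ hQouter hL5 hL3 hLQ hLinj)
  exact ⟨fun v => c (some v), fun v => hcL (some v) (by simp), fun u v huv =>
    hcadj (some u) (by simp) (some v) (by simp) huv⟩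

/-- **Thomassen's theorem.** Let `G` be a plane graph whose outer face is bounded by a
cycle `F`, let `xy` be an edge of `F`, and let `L` be a list assignment such that
`|L(v)| ≥ 5` for every vertex not on `F`, `|L(v)| ≥ 3` for every vertex of `F` other
than `x` and `y`, `|L(x)| = |L(y)| = 1` and `L(x) ≠ L(y)`.  Then `G` is `L`-colorable. -/
theorem planar_choosable_precolored_edge
    {V : Type} [Fintype V] (G : SimpleGraph V) (D : Drawing G) (hplane : D.IsPlane)
    {r : V} (F : G.Walk r r) (hFcyc : F.IsCycle) (hFbd : D.BoundsOuter F)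
    (x y : V) (hxy : G.Adj x y) (hxyF : s(x, y) ∈ F.edges)
    (L : V → Finset ℕ)
    (hL5 : ∀ v : V, v ∉ F.support → 5 ≤ (L v).card)
    (hL3 : ∀ v ∈ F.support, v ≠ x → v ≠ y → 3 ≤ (L v).card)
    (hLx : (L x).card = 1) (hLy : (L y).card = 1) (hLxy : L x ≠ L y) :
    ListColorable G L := by
  classical
  simp only [← hFbd.onOuter_iff] at hL5 hL3
  exact planar_choosable_precolored_edge_general G D hplane {x, y} (by simp [hxy])
    (by simp [hFbd.onOuter_iff, F.fst_mem_support_of_mem_edges hxyF,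
      F.snd_mem_support_of_mem_edges hxyF]) L hL5 (by simpa using hL3) (by simp [hLx, hLy])
    (by simp [hLxy])
end
end

section
/- Every planar graph is 5-choosable. -/
open Set

noncomputable section

/-!
Planarity enters only through the absence of `K₅` and `K₃,₃` minors. Disjoint connected branch sets
in a plane drawing give paths for the edges of the minor, disjoint edges getting disjoint paths, and
van Kampen's parity obstruction excludes this: a logarithm of `δ t - γ s` expresses the crossing
parity of two disjoint paths through winding numbers, whose total contribution is even.

The colouring is Thomassen's induction, without faces. A connected set `A` of deleted vertices
replaces the outer face, and the boundary vertices are those adjacent to `A`. If an edge between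
boundary vertices separates the graph, colour the two sides in turn. Otherwise the minor condition
bounds the boundary: contracting `A`, a vertex with three boundary neighbours would yield one of
the two minors. Hence the next boundary vertex after the precoloured one has at most one further
boundary neighbour, and it can be moved into `A` after reserving two of its colours. Infinite graphs
follow by compactness.
-/

/-- A representation of `H` in a space `X` by points and paths in which only disjoint edges are
required to have disjoint paths; adjacent edges may meet, and paths need not be simple. -/
structure AlmostEmbedding {ι : Type*} (H : SimpleGraph ι) (X : Type*) [TopologicalSpace X] where
  pos : ι → X
  path : ∀ ⦃i j : ι⦄, H.Adj i j → Path (pos i) (pos j)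
  disjoint_range : ∀ ⦃i j u v : ι⦄ (h : H.Adj i j) (h' : H.Adj u v),
    i ≠ u → i ≠ v → j ≠ u → j ≠ v → Disjoint (range (path h)) (range (path h'))

namespace AlmostEmbedding

variable {ι κ X Y : Type*} [TopologicalSpace X] [TopologicalSpace Y] {H : SimpleGraph ι}
  {K : SimpleGraph κ}

/-- The image of an almost embedding under an injective continuous map. -/
def map (φ : AlmostEmbedding H X) {f : X → Y} (hf : Continuous f) (hinj : f.Injective) :
    AlmostEmbedding H Y where
  pos := f ∘ φ.pos
  path _ _ h := (φ.path h).map hf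
  disjoint_range i j u v h h' hiu hiv hju hjv := by
    simpa only [Path.map_coe, range_comp, disjoint_image_iff hinj] using
      φ.disjoint_range h h' hiu hiv hju hjv

/-- The restriction of an almost embedding of `H` to a copy of `K` in `H`. -/
def comap (φ : AlmostEmbedding H X) (f : K ↪g H) : AlmostEmbedding K X where
  pos := φ.pos ∘ f
  path _ _ h := φ.path (f.map_adj_iff.2 h)
  disjoint_range _ _ _ _ _ _ hiu hiv hju hjv := φ.disjoint_range _ _ (f.injective.ne hiu)
    (f.injective.ne hiv) (f.injective.ne hju) (f.injective.ne hjv)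

end AlmostEmbedding

section LogIncrement

lemma exists_continuous_log {E : Type*} [NormedAddCommGroup E] [NormedSpace ℝ E] {g : E → ℂ}
    (hg : Continuous g) (h0 : ∀ x, g x ≠ 0) :
    ∃ F : E → ℂ, Continuous F ∧ ∀ x, Complex.exp (F x) = g x := by
  obtain ⟨F, ⟨-, hF⟩, -⟩ := Complex.isCoveringMapOn_exp.existsUnique_continuousMap_lifts
    ⟨g, hg⟩ (a₀ := 0) (Complex.exp_log (h0 0)) h0
  exact ⟨F, F.continuous, congrFun hF⟩

lemma continuous_log_sub_eq {F F' : ℝ → ℂ} (hF : Continuous F) (hF' : Continuous F')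
    (h : ∀ t, Complex.exp (F t) = Complex.exp (F' t)) (s t : ℝ) : F t - F s = F' t - F' s := by
  have hconst : Complex.exp (F s - F' s) = 1 := by
    rw [Complex.exp_sub, h, div_self (Complex.exp_ne_zero _)]
  have hlift := (Complex.isCoveringMapOn_exp.existsUnique_continuousMap_lifts
    ⟨fun t => Complex.exp (F t), by fun_prop⟩ (a₀ := s) (e₀ := F s) rfl
    fun _ => Complex.exp_ne_zero _).unique
    (y₁ := ⟨F, hF⟩) (y₂ := ⟨fun t => F' t + (F s - F' s), by fun_prop⟩)
    ⟨rfl, rfl⟩ ⟨by simp, funext fun t => by simp [Complex.exp_add, hconst, h]⟩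
  have hFt : F t = F' t + (F s - F' s) := DFunLike.congr_fun hlift t
  rw [hFt]
  ring

/-- `HasLogIncrement γ z w` says that a continuous branch of `log (γ t - z)` increases by `w`
along the path `γ`; the imaginary part of `w` is the angle swept out by `γ` as seen from `z`. -/
def HasLogIncrement {a b : ℂ} (γ : Path a b) (z w : ℂ) : Prop :=
  ∃ F : ℝ → ℂ, Continuous F ∧ (∀ t, Complex.exp (F t) = γ.extend t - z) ∧ F 1 - F 0 = w

namespace HasLogIncrement

variable {a b c d z w w' : ℂ} {γ : Path a b} {δ : Path c d}

lemma unique (h : HasLogIncrement γ z w) (h' : HasLogIncrement γ z w') : w = w' := by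
  obtain ⟨F, hF, hexp, rfl⟩ := h
  obtain ⟨F', hF', hexp', rfl⟩ := h'
  exact continuous_log_sub_eq hF hF' (fun t => (hexp t).trans (hexp' t).symm) 0 1

lemma exists_int (hz : z ∉ range γ) {l m : ℂ} (hl : Complex.exp l = a - z)
    (hm : Complex.exp m = b - z) :
    ∃ n : ℤ, HasLogIncrement γ z (m - l + n * (2 * Real.pi * Complex.I)) := by
  obtain ⟨F, hF, hexp⟩ := exists_continuous_log (g := fun t => γ.extend t - z) (by fun_prop)
    fun t => sub_ne_zero.2 fun ht => hz (γ.extend_range ▸ ⟨t, ht⟩)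
  obtain ⟨p, hp⟩ := Complex.exp_eq_exp_iff_exists_int.1
    (show Complex.exp (F 0) = Complex.exp l by rw [hexp, hl, γ.extend_zero])
  obtain ⟨q, hq⟩ := Complex.exp_eq_exp_iff_exists_int.1
    (show Complex.exp (F 1) = Complex.exp m by rw [hexp, hm, γ.extend_one])
  refine ⟨q - p, F, hF, hexp, ?_⟩
  rw [hp, hq]
  push_cast
  ring

/-- A logarithm of `δ t - γ s` on the whole square shows that the increments along its four sides
add up to zero. -/
lemma add_eq_add (hdisj : Disjoint (range γ) (range δ)) {wa wb wc wd : ℂ}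
    (ha : HasLogIncrement δ a wa) (hb : HasLogIncrement δ b wb)
    (hc : HasLogIncrement γ c wc) (hd : HasLogIncrement γ d wd) : wa + wd = wb + wc := by
  obtain ⟨F, hF, hexp⟩ := exists_continuous_log
    (g := fun x : ℝ × ℝ => δ.extend x.2 - γ.extend x.1) (by fun_prop) fun x =>
      sub_ne_zero.2 fun hx => disjoint_left.1 hdisj (γ.extend_range.le ⟨x.1, rfl⟩)
        (δ.extend_range.le ⟨x.2, hx⟩)
  have ha' : HasLogIncrement δ a (F (0, 1) - F (0, 0)) :=
    ⟨fun t => F (0, t), by fun_prop, fun t => by simp [hexp], rfl⟩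
  have hb' : HasLogIncrement δ b (F (1, 1) - F (1, 0)) :=
    ⟨fun t => F (1, t), by fun_prop, fun t => by simp [hexp], rfl⟩
  have hc' : HasLogIncrement γ c (F (1, 0) - F (0, 0)) :=
    ⟨fun t => F (t, 0) + Real.pi * Complex.I, by fun_prop,
      fun t => by simp [Complex.exp_add, hexp], by ring⟩
  have hd' : HasLogIncrement γ d (F (1, 1) - F (0, 1)) :=
    ⟨fun t => F (t, 1) + Real.pi * Complex.I, by fun_prop,
      fun t => by simp [Complex.exp_add, hexp], by ring⟩
  rw [ha.unique ha', hb.unique hb', hc.unique hc', hd.unique hd']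
  ring

end HasLogIncrement

end LogIncrement

section VanKampen

open Finset in
lemma sum_prod_eq_sum_lt {τ α M : Type*} [Fintype τ] [LinearOrder α] [AddCommMonoid M]
    (key : τ → α) (a : τ × τ → M) (h0 : ∀ x, key x.1 = key x.2 → a x = 0) :
    ∑ x, a x = ∑ x : τ × τ with key x.1 < key x.2, (a x + a x.swap) := by
  have hgt : ∑ x with ¬ key x.1 < key x.2, a x = ∑ x with key x.2 < key x.1, a x := by
    refine (sum_subset (fun x => ?_) fun x hx hx' => ?_).symm
    · simpa using fun h => h.le
    · simp only [mem_filter, Finset.mem_univ, true_and, not_lt] at hx hx'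
      exact h0 x (hx'.antisymm hx)
  have hswap : ∑ x with key x.2 < key x.1, a x = ∑ x : τ × τ with key x.1 < key x.2, a x.swap :=
    sum_equiv (Equiv.prodComm τ τ) (by simp) (by simp)
  rw [sum_add_distrib, ← hswap, ← hgt, sum_filter_add_sum_filter_not]

variable {ι : Type*} [LinearOrder ι]

/-- A logarithm of `p q - p k`, chosen so that exchanging `k` and `q` changes it by exactly
`π * I`, with the sign given by the order of `k` and `q`. -/
def chordLog (p : ι → ℂ) (k q : ι) : ℂ :=
  if k < q then Complex.log (p q - p k) else Complex.log (p k - p q) + Real.pi * Complex.I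

lemma exp_chordLog {p : ι → ℂ} {k q : ι} (h : p q ≠ p k) :
    Complex.exp (chordLog p k q) = p q - p k := by
  unfold chordLog
  split_ifs
  · exact Complex.exp_log (sub_ne_zero.2 h)
  · rw [Complex.exp_add, Complex.exp_log (sub_ne_zero.2 h.symm), Complex.exp_pi_mul_I]
    ring

lemma chordLog_swap (p : ι → ℂ) {k q : ι} (h : k < q) :
    chordLog p q k = chordLog p k q + Real.pi * Complex.I := by
  simp only [chordLog, if_neg h.not_gt, if_pos h]

variable {H : SimpleGraph ι}

namespace AlmostEmbedding

lemma exists_winding (φ : AlmostEmbedding H ℂ) :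
    ∃ N : ι → ι → ι → ℤ, ∀ k ⦃i j⦄ (h : H.Adj i j), φ.pos k ∉ range (φ.path h) →
      HasLogIncrement (φ.path h) (φ.pos k) (chordLog φ.pos k j - chordLog φ.pos k i +
        N k i j * (2 * Real.pi * Complex.I)) := by
  have hexists : ∀ k i j : ι, ∃ n : ℤ, ∀ h : H.Adj i j, φ.pos k ∉ range (φ.path h) →
      HasLogIncrement (φ.path h) (φ.pos k) (chordLog φ.pos k j - chordLog φ.pos k i +
        n * (2 * Real.pi * Complex.I)) := by
    intro k i j
    by_cases h : ∃ h : H.Adj i j, φ.pos k ∉ range (φ.path h)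
    · obtain ⟨hadj, hk⟩ := h
      obtain ⟨n, hn⟩ := HasLogIncrement.exists_int hk
        (exp_chordLog fun hi => hk (hi ▸ ⟨0, Path.source _⟩))
        (exp_chordLog fun hj => hk (hj ▸ ⟨1, Path.target _⟩))
      exact ⟨n, fun _ _ => hn⟩
    · exact ⟨0, fun hadj hk => absurd ⟨hadj, hk⟩ h⟩
  choose N hN using hexists
  exact ⟨N, hN⟩

/-- The crossing parity of two disjoint edges is that of two chords of a convex polygon whose
vertices are numbered in order, corrected by winding numbers. -/
lemma exists_winding_parity (φ : AlmostEmbedding H ℂ) :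
    ∃ ω : ι → ι → ι → ZMod 2, ∀ ⦃i j u v⦄, H.Adj i j → H.Adj u v → u < v → i < u →
      j ≠ u → j ≠ v →
      ω i u v + ω j u v + (ω u i j + ω v i j) = if u < j ∧ j < v then 1 else 0 := by
  obtain ⟨N, hN⟩ := φ.exists_winding
  refine ⟨fun k i j => N k i j, fun i j u v hij huv hlt hiu hju hjv => ?_⟩
  have hrange := φ.disjoint_range hij huv hiu.ne (hiu.trans hlt).ne hju hjv
  have hsides := HasLogIncrement.add_eq_add hrange
    (hN i huv (disjoint_left.1 hrange ⟨0, Path.source _⟩))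
    (hN j huv (disjoint_left.1 hrange ⟨1, Path.target _⟩))
    (hN u hij (disjoint_right.1 hrange ⟨0, Path.source _⟩))
    (hN v hij (disjoint_right.1 hrange ⟨1, Path.target _⟩))
  have hpi : (2 * Real.pi * Complex.I : ℂ) ≠ 0 := Complex.two_pi_I_ne_zero
  have hint : N j u v + N u i j - N i u v - N v i j = if u < j ∧ j < v then 1 else 0 := by
    have hcast : ((N j u v + N u i j - N i u v - N v i j : ℤ) : ℂ) =
        ((if u < j ∧ j < v then 1 else 0 : ℤ) : ℂ) := by
      refine mul_right_cancel₀ hpi ?_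
      have hui := chordLog_swap φ.pos hiu
      have hvi := chordLog_swap φ.pos (hiu.trans hlt)
      rcases lt_or_gt_of_ne hju with hju | hju <;> rcases lt_or_gt_of_ne hjv with hjv | hjv <;>
        have hu := chordLog_swap φ.pos hju <;> have hv := chordLog_swap φ.pos hjv
      · rw [if_neg fun h => h.1.not_gt hju]
        push_cast
        linear_combination hui - hvi + hv - hu - hsides
      · order
      · rw [if_pos ⟨hju, hjv⟩]
        push_cast
        linear_combination hui - hvi + hv + hu - hsides
      · rw [if_neg fun h => h.2.not_gt hjv]
        push_cast
        linear_combination hui - hvi - hv + hu - hsides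
    exact_mod_cast hcast
  have hmod := congrArg (Int.cast : ℤ → ZMod 2) hint
  push_cast [CharTwo.sub_eq_add] at hmod
  rw [← hmod]
  ring

open Finset in
lemma sum_disjoint_edges_eq_zero [Fintype ι] [DecidableRel H.Adj]
    (heven : ∀ u v k, H.Adj u v → k ≠ u → k ≠ v → Even #(H.neighborFinset k \ {u, v}))
    (w : ι → ZMod 2) {u v : ι} (huv : H.Adj u v) :
    ∑ e : ι × ι with e.1 < e.2,
      (if H.Adj e.1 e.2 ∧ (e.1 ≠ u ∧ e.1 ≠ v) ∧ e.2 ≠ u ∧ e.2 ≠ v then w e.1 + w e.2 else 0) =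
      0 := by
  have hfold := sum_prod_eq_sum_lt id (fun e : ι × ι =>
    if H.Adj e.1 e.2 ∧ (e.1 ≠ u ∧ e.1 ≠ v) ∧ e.2 ≠ u ∧ e.2 ≠ v then w e.1 else 0)
    fun e he => if_neg fun h => h.1.ne he
  have hsymm (e : ι × ι) : (H.Adj e.2 e.1 ∧ (e.2 ≠ u ∧ e.2 ≠ v) ∧ e.1 ≠ u ∧ e.1 ≠ v) ↔
      H.Adj e.1 e.2 ∧ (e.1 ≠ u ∧ e.1 ≠ v) ∧ e.2 ≠ u ∧ e.2 ≠ v := by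
    rw [H.adj_comm, and_comm (a := e.2 ≠ u ∧ e.2 ≠ v)]
  simp only [id, Prod.fst_swap, Prod.snd_swap, hsymm, ite_add_ite, add_zero] at hfold
  rw [← hfold, Fintype.sum_prod_type]
  refine sum_eq_zero fun k _ => ?_
  by_cases hk : k ≠ u ∧ k ≠ v
  · have hfilter : ({l | H.Adj k l ∧ (k ≠ u ∧ k ≠ v) ∧ l ≠ u ∧ l ≠ v} : Finset ι) =
        H.neighborFinset k \ {u, v} := by
      ext
      simp [hk]
    simp only [← sum_filter, hfilter, sum_const, nsmul_eq_mul,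
      (ZMod.natCast_eq_zero_iff_even).2 (heven u v k huv hk.1 hk.2), zero_mul]
  · exact sum_eq_zero fun l _ => if_neg fun h => hk h.2.1

open Finset in
/-- The van Kampen obstruction. By the evenness hypothesis the winding number corrections cancel
modulo 2, leaving the parity of the number of crossings when the vertices are placed in order on a
convex curve. -/
theorem isEmpty_of_odd_card [Fintype ι] [DecidableRel H.Adj]
    (heven : ∀ u v k, H.Adj u v → k ≠ u → k ≠ v → Even #(H.neighborFinset k \ {u, v}))
    (hodd : Odd #{q : (ι × ι) × (ι × ι) | H.Adj q.1.1 q.1.2 ∧ H.Adj q.2.1 q.2.2 ∧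
      q.1.1 < q.2.1 ∧ q.2.1 < q.1.2 ∧ q.1.2 < q.2.2}) : IsEmpty (AlmostEmbedding H ℂ) := by
  refine ⟨fun φ => ?_⟩
  obtain ⟨ω, hω⟩ := φ.exists_winding_parity
  let a (q : (ι × ι) × (ι × ι)) : ZMod 2 :=
    if (H.Adj q.2.1 q.2.2 ∧ q.2.1 < q.2.2) ∧ q.1.1 < q.1.2 ∧ H.Adj q.1.1 q.1.2 ∧
        (q.1.1 ≠ q.2.1 ∧ q.1.1 ≠ q.2.2) ∧ q.1.2 ≠ q.2.1 ∧ q.1.2 ≠ q.2.2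
    then ω q.1.1 q.2.1 q.2.2 + ω q.1.2 q.2.1 q.2.2 else 0
  have hzero : ∑ q, a q = 0 := by
    rw [Fintype.sum_prod_type_right]
    refine sum_eq_zero fun f _ => ?_
    by_cases hf : H.Adj f.1 f.2 ∧ f.1 < f.2
    · rw [← sum_disjoint_edges_eq_zero heven (fun k => ω k f.1 f.2) hf.1, sum_filter]
      refine sum_congr rfl fun e _ => ?_
      rw [← ite_and]
      exact if_congr (and_iff_right hf) rfl rfl
    · exact sum_eq_zero fun e _ => if_neg fun h => hf h.1
  have hcount : ∑ q, a q = #{q : (ι × ι) × (ι × ι) | H.Adj q.1.1 q.1.2 ∧ H.Adj q.2.1 q.2.2 ∧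
      q.1.1 < q.2.1 ∧ q.2.1 < q.1.2 ∧ q.1.2 < q.2.2} := by
    rw [sum_prod_eq_sum_lt Prod.fst a fun q hq => if_neg fun h => h.2.2.2.1.1 hq,
      natCast_card_filter, sum_filter]
    refine sum_congr rfl fun ⟨⟨i, j⟩, u, v⟩ _ => ?_
    simp only [a, Prod.swap]
    grind
  rw [hzero] at hcount
  exact (Nat.not_even_iff_odd.2 hodd) ((ZMod.natCast_eq_zero_iff_even).1 hcount.symm)

theorem isEmpty_completeGraph_fin_five :
    IsEmpty (AlmostEmbedding (⊤ : SimpleGraph (Fin 5)) ℂ) :=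
  isEmpty_of_odd_card (by decide +kernel) (by decide +kernel)

instance : DecidableRel (completeBipartiteGraph (Fin 3) (Fin 3)).Adj := fun _ _ =>
  inferInstanceAs (Decidable (_ ∧ _ ∨ _ ∧ _))

theorem isEmpty_completeBipartiteGraph_fin_three :
    IsEmpty (AlmostEmbedding (completeBipartiteGraph (Fin 3) (Fin 3)) ℂ) := by
  let f : SimpleGraph.comap finSumFinEquiv.symm (completeBipartiteGraph (Fin 3) (Fin 3)) ↪g
    completeBipartiteGraph (Fin 3) (Fin 3) := .comap finSumFinEquiv.symm.toEmbedding _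
  have : IsEmpty (AlmostEmbedding (SimpleGraph.comap finSumFinEquiv.symm
      (completeBipartiteGraph (Fin 3) (Fin 3))) ℂ) :=
    isEmpty_of_odd_card (by decide +kernel) (by decide +kernel)
  exact ⟨fun φ => isEmptyElim (φ.comap f)⟩

end AlmostEmbedding
end VanKampen

section Minor

variable {V ι : Type*}

/-- Two vertex sets touch when an edge joins them. -/
def Touches (G : SimpleGraph V) (A B : Set V) : Prop :=
  ∃ a ∈ A, ∃ b ∈ B, G.Adj a b

lemma Touches.symm {G : SimpleGraph V} {A B : Set V} (h : Touches G A B) : Touches G B A :=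
  let ⟨a, ha, b, hb, hab⟩ := h
  ⟨b, hb, a, ha, hab.symm⟩

lemma Touches.mono {G : SimpleGraph V} {A A' B B' : Set V} (h : Touches G A B) (hA : A ⊆ A')
    (hB : B ⊆ B') : Touches G A' B' :=
  let ⟨a, ha, b, hb, hab⟩ := h
  ⟨a, hA ha, b, hB hb, hab⟩

/-- Disjoint connected vertex sets: the candidates for the branch sets of a minor. -/
structure IsBranchFamily (G : SimpleGraph V) (T : ι → Set V) : Prop where
  connected : ∀ i, (G.induce (T i)).Connected
  disjoint : Pairwise fun i j => Disjoint (T i) (T j)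

/-- `H` is a minor of `G`, in terms of branch sets; the branch sets need not cover `G`. -/
def IsMinor (H : SimpleGraph ι) (G : SimpleGraph V) : Prop :=
  ∃ B : ι → Set V, IsBranchFamily G B ∧ ∀ ⦃i j⦄, H.Adj i j → Touches G (B i) (B j)

/-- The graph has neither a `K₅` minor nor a `K₃,₃` minor. -/
structure KuratowskiMinorFree (G : SimpleGraph V) : Prop where
  not_isMinor_completeGraph : ¬ IsMinor (⊤ : SimpleGraph (Fin 5)) G
  not_isMinor_completeBipartiteGraph : ¬ IsMinor (completeBipartiteGraph (Fin 3) (Fin 3)) G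

end Minor

namespace Drawing

variable {V : Type} {G : SimpleGraph V} (D : Drawing G)

/-- The points of the plane used by the drawing of the subgraph induced on `B`. -/
def inducedSet (B : Set V) : Set (ℝ × ℝ) :=
  {p | (∃ v ∈ B, D.pos v = p) ∨ ∃ u ∈ B, ∃ v ∈ B, ∃ h : G.Adj u v, p ∈ D.arcInterior h}

variable {D}

lemma pos_notMem_arcInterior ⦃u v : V⦄ (h : G.Adj u v) (w : V) : D.pos w ∉ D.arcInterior h :=
  fun ⟨t, ht, hw⟩ => (D.arc_vertex h t w hw).elim ht.1 ht.2

lemma arcSet_subset_inducedSet {B : Set V} ⦃u v : V⦄ (h : G.Adj u v) (hu : u ∈ B) (hv : v ∈ B) :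
    D.arcSet h ⊆ D.inducedSet B := by
  rintro _ ⟨t, rfl⟩
  by_cases h0 : t = 0
  · exact Or.inl ⟨u, hu, by rw [h0, Path.source]⟩
  by_cases h1 : t = 1
  · exact Or.inl ⟨v, hv, by rw [h1, Path.target]⟩
  exact Or.inr ⟨u, hu, v, hv, h, t, ⟨h0, h1⟩, rfl⟩

lemma IsPlane.disjoint_inducedSet (hplane : D.IsPlane) {B C : Set V} (hBC : Disjoint B C) :
    Disjoint (D.inducedSet B) (D.inducedSet C) := by
  refine disjoint_left.2 ?_
  rintro p (⟨v, hv, rfl⟩ | ⟨u, hu, v, -, h, hp⟩) (⟨y, hy, hyp⟩ | ⟨x, hx, y, hy, h', hp'⟩)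
  · exact disjoint_left.1 hBC hv (D.pos_inj hyp ▸ hy)
  · exact pos_notMem_arcInterior h' v hp'
  · exact pos_notMem_arcInterior h y (hyp ▸ hp)
  · refine hplane p ⟨u, v, x, y, h, h', fun hedge => ?_, hp, hp'⟩
    have hmem : u ∈ s(x, y) := hedge ▸ Sym2.mem_mk_left u v
    rcases Sym2.mem_iff.1 hmem with rfl | rfl
    exacts [disjoint_left.1 hBC hu hx, disjoint_left.1 hBC hu hy]

lemma joinedIn_inducedSet {B : Set V} (hB : (G.induce B).Preconnected) (u v : B) :
    JoinedIn (D.inducedSet B) (D.pos u) (D.pos v) := by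
  induction (SimpleGraph.reachable_iff_reflTransGen u v).1 (hB u v) with
  | refl => exact JoinedIn.refl (Or.inl ⟨u, u.2, rfl⟩)
  | @tail x y _ hxy ih =>
    exact ih.trans ⟨D.arc hxy, fun t => arcSet_subset_inducedSet _ x.2 y.2 ⟨t, rfl⟩⟩

lemma IsPlane.nonempty_almostEmbedding (hplane : D.IsPlane) {ι : Type*} {H : SimpleGraph ι}
    (hH : IsMinor H G) : Nonempty (AlmostEmbedding H (ℝ × ℝ)) := by
  obtain ⟨B, hB, hadj⟩ := hH
  let c (i : ι) : B i := (hB.connected i).nonempty.some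
  have hjoined ⦃i j⦄ (h : H.Adj i j) :
      JoinedIn (D.inducedSet (B i ∪ B j)) (D.pos (c i)) (D.pos (c j)) := by
    obtain ⟨a, ha, b, hb, hab⟩ := hadj h
    exact joinedIn_inducedSet (SimpleGraph.connected_induce_union (hB.connected i).preconnected
      (hB.connected j).preconnected ha hb hab).preconnected ⟨c i, Or.inl (c i).2⟩
      ⟨c j, Or.inr (c j).2⟩
  refine ⟨⟨fun i => D.pos (c i), fun i j h => (hjoined h).somePath,
    fun i j u v h h' hiu hiv hju hjv => ?_⟩⟩
  refine (hplane.disjoint_inducedSet (B := B i ∪ B j) (C := B u ∪ B v) ?_).mono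
    (range_subset_iff.2 (hjoined h).somePath_mem) (range_subset_iff.2 (hjoined h').somePath_mem)
  exact disjoint_union_left.2 ⟨disjoint_union_right.2 ⟨hB.disjoint hiu, hB.disjoint hiv⟩,
    disjoint_union_right.2 ⟨hB.disjoint hju, hB.disjoint hjv⟩⟩

lemma IsPlane.kuratowskiMinorFree (hplane : D.IsPlane) : KuratowskiMinorFree G := by
  have hcomplex {ι : Type} {H : SimpleGraph ι} (hH : IsMinor H G) :
      Nonempty (AlmostEmbedding H ℂ) :=
    (hplane.nonempty_almostEmbedding hH).map fun φ =>
      φ.map Complex.equivRealProdCLM.symm.continuous Complex.equivRealProdCLM.symm.injective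
  exact ⟨fun h => not_isEmpty_iff.2 (hcomplex h) AlmostEmbedding.isEmpty_completeGraph_fin_five,
    fun h => not_isEmpty_iff.2 (hcomplex h)
      AlmostEmbedding.isEmpty_completeBipartiteGraph_fin_three⟩

end Drawing

section Connectivity

variable {V : Type*} {G : SimpleGraph V}

/-- The vertices with a neighbour in `A`; vertices of `A` itself may be among them. -/
def neighborhood (G : SimpleGraph V) (A : Set V) : Set V :=
  {v | ∃ a ∈ A, G.Adj a v}

lemma neighborhood_mono {A B : Set V} (h : A ⊆ B) : neighborhood G A ⊆ neighborhood G B :=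
  fun _ ⟨a, ha, hadj⟩ => ⟨a, h ha, hadj⟩

lemma touches_of_mem_neighborhood {A B : Set V} {v : V} (hA : v ∈ neighborhood G A) (hB : v ∈ B) :
    Touches G A B :=
  let ⟨a, ha, hadj⟩ := hA
  ⟨a, ha, v, hB, hadj⟩

lemma preconnected_induce_insert {A : Set V} (hA : (G.induce A).Preconnected) {v : V}
    (hv : v ∈ neighborhood G A) : (G.induce (insert v A)).Preconnected := by
  obtain ⟨a, ha, hadj⟩ := hv
  exact insert_eq v A ▸ (SimpleGraph.connected_induce_union (s := {v})
    .of_subsingleton hA rfl ha hadj.symm).preconnected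

lemma touches_of_preconnected {S T : Set V} (hS : (G.induce S).Preconnected)
    (hT : (S ∩ T).Nonempty) (hT' : (S \ T).Nonempty) : Touches G (S ∩ T) (S \ T) := by
  obtain ⟨u, huS, huT⟩ := hT
  obtain ⟨v, hvS, hvT⟩ := hT'
  obtain ⟨p⟩ := hS ⟨u, huS⟩ ⟨v, hvS⟩
  obtain ⟨d, -, hfst, hsnd⟩ := p.exists_boundary_dart (Subtype.val ⁻¹' T) huT hvT
  exact ⟨d.fst, ⟨d.fst.2, hfst⟩, d.snd, ⟨d.snd.2, hsnd⟩, d.adj⟩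

lemma exists_component {S : Set V} {a : V} (ha : a ∈ S) :
    ∃ C ⊆ S, a ∈ C ∧ (G.induce C).Connected ∧ ¬ Touches G C (S \ C) := by
  let C : Set V := {x | ∃ hx : x ∈ S, (G.induce S).Reachable ⟨a, ha⟩ ⟨x, hx⟩}
  have haC : a ∈ C := ⟨ha, .refl _⟩
  have hstep {x y : V} (hx : x ∈ C) (hy : y ∈ S) (hxy : G.Adj x y) : y ∈ C :=
    ⟨hy, hx.2.trans (SimpleGraph.Adj.reachable (G := G.induce S) hxy)⟩
  refine ⟨C, fun x hx => hx.1, haC, ?_, fun ⟨x, hx, y, ⟨hy, hyC⟩, hxy⟩ => hyC (hstep hx hy hxy)⟩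
  refine (SimpleGraph.connected_iff_exists_forall_reachable _).2 ⟨⟨a, haC⟩, fun ⟨x, hx⟩ => ?_⟩
  suffices ∀ z : S, Relation.ReflTransGen (G.induce S).Adj ⟨a, ha⟩ z →
      ∃ hz : z.1 ∈ C, (G.induce C).Reachable ⟨a, haC⟩ ⟨z, hz⟩ from
    (this ⟨x, hx.1⟩ ((SimpleGraph.reachable_iff_reflTransGen _ _).1 hx.2)).2
  intro z hz
  induction hz with
  | refl => exact ⟨haC, .refl _⟩
  | @tail y z _ hyz ih =>
    obtain ⟨hy, hreach⟩ := ih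
    have hzC := hstep hy z.2 hyz
    exact ⟨hzC, hreach.trans (SimpleGraph.Adj.reachable (G := G.induce C) hyz)⟩

lemma exists_isPath_of_preconnected {S : Set V} (hS : (G.induce S).Preconnected) {u v : V}
    (hu : u ∈ S) (hv : v ∈ S) : ∃ w : G.Walk u v, w.IsPath ∧ {x | x ∈ w.support} ⊆ S := by
  obtain ⟨w, hw⟩ := (hS ⟨u, hu⟩ ⟨v, hv⟩).exists_isPath
  refine ⟨w.map (SimpleGraph.Embedding.induce S).toHom, hw.map Subtype.val_injective,
    fun x hx => ?_⟩
  obtain ⟨y, -, rfl⟩ := List.mem_map.1 (SimpleGraph.Walk.support_map _ w ▸ hx)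
  exact y.2

end Connectivity

section RootedMinor

variable {V : Type*} {G : SimpleGraph V}

/-- Disjoint connected subsets `T₁ ∋ u` and `T₂ ∋ v` of `S`. -/
structure IsRootedPair (G : SimpleGraph V) (S : Set V) (u v : V) (T₁ T₂ : Set V) : Prop where
  connected_left : (G.induce T₁).Connected
  connected_right : (G.induce T₂).Connected
  disjoint : Disjoint T₁ T₂
  mem_left : u ∈ T₁
  mem_right : v ∈ T₂
  subset_left : T₁ ⊆ S
  subset_right : T₂ ⊆ S

lemma IsRootedPair.insert {S T₁ T₂ : Set V} {u u' v : V} (h : IsRootedPair G S u' v T₁ T₂)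
    (hadj : G.Adj u u') (hu : u ∉ S) : IsRootedPair G (insert u S) u v (insert u T₁) T₂ where
  connected_left := insert_eq u T₁ ▸ SimpleGraph.connected_induce_union .of_subsingleton
    h.connected_left.preconnected rfl h.mem_left hadj
  connected_right := h.connected_right
  disjoint := disjoint_insert_left.2 ⟨fun hu' => hu (h.subset_right hu'), h.disjoint⟩
  mem_left := mem_insert u T₁
  mem_right := h.mem_right
  subset_left := insert_subset_insert h.subset_left
  subset_right := h.subset_right.trans (subset_insert u S)

lemma isRootedPair_singleton {S T : Set V} {u v : V} (hT : (G.induce T).Connected) (hu : u ∉ T)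
    (hv : v ∈ T) (hTS : T ⊆ S) (huS : u ∈ S) : IsRootedPair G S u v {u} T where
  connected_left := .of_subsingleton
  connected_right := hT
  disjoint := disjoint_singleton_left.2 hu
  mem_left := rfl
  mem_right := hv
  subset_left := singleton_subset_iff.2 huS
  subset_right := hTS

lemma exists_isRootedPair_deleting_snd {u y v : V} (hadj : G.Adj u y) (w : G.Walk y v)
    (hw : (SimpleGraph.Walk.cons hadj w).IsPath) (hyv : y ≠ v) :
    ∃ T₁ T₂, IsRootedPair G {x | x ∈ (SimpleGraph.Walk.cons hadj w).support} u v T₁ T₂ ∧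
      y ∉ T₁ ∪ T₂ ∧ y ∈ neighborhood G T₁ ∩ neighborhood G T₂ := by
  obtain ⟨hw', hu⟩ := (SimpleGraph.Walk.cons_isPath_iff _ _).1 hw
  cases w with
  | nil => exact absurd rfl hyv
  | @cons _ z _ hyz w =>
    obtain ⟨-, hy⟩ := (SimpleGraph.Walk.cons_isPath_iff _ _).1 hw'
    refine ⟨{u}, {x | x ∈ w.support}, isRootedPair_singleton w.connected_induce_support
      (fun h => hu (List.mem_cons_of_mem y h)) w.end_mem_support (fun x hx => ?_) (by simp), ?_,
      ⟨u, rfl, hadj⟩, z, w.start_mem_support, hyz.symm⟩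
    · exact List.mem_cons_of_mem u (List.mem_cons_of_mem y hx)
    · simp [hadj.ne', hy]

lemma exists_isRootedPair_of_isPath {M : Set V} {u v : V} (w : G.Walk u v) (hw : w.IsPath)
    (hu : ∃ x ∈ M, x ∈ w.support ∧ x ≠ u) (hv : ∃ x ∈ M, x ∈ w.support ∧ x ≠ v) :
    ∃ T₁ T₂, IsRootedPair G {x | x ∈ w.support} u v T₁ T₂ ∧
      ((Touches G T₁ T₂ ∧ (T₁ ∩ M).Nonempty ∧ (T₂ ∩ M).Nonempty) ∨
        ∃ p ∈ M, p ∈ w.support ∧ p ∉ T₁ ∪ T₂ ∧ p ∈ neighborhood G T₁ ∩ neighborhood G T₂) := by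
  induction w with
  | nil => simp at hu
  | @cons u u' v hadj w ih =>
    obtain ⟨hw', hu'⟩ := (SimpleGraph.Walk.cons_isPath_iff _ _).1 hw
    obtain ⟨x, hxM, hx, hxu⟩ := hu
    replace hx : x ∈ w.support := by simpa [hxu] using hx
    have hsupport : {x | x ∈ (SimpleGraph.Walk.cons hadj w).support} =
        insert u {x | x ∈ w.support} := by ext; simp
    by_cases huM : u ∈ M
    · exact ⟨{u}, {x | x ∈ w.support}, isRootedPair_singleton w.connected_induce_support hu'
        w.end_mem_support (hsupport ▸ subset_insert _ _) (by simp),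
        Or.inl ⟨⟨u, rfl, u', w.start_mem_support, hadj⟩, ⟨u, rfl, huM⟩, ⟨x, hx, hxM⟩⟩⟩
    replace hv : ∃ x ∈ M, x ∈ w.support ∧ x ≠ v := by
      obtain ⟨y, hyM, hy, hyv⟩ := hv
      have hyu : y ≠ u := fun h => huM (h ▸ hyM)
      exact ⟨y, hyM, by simpa [hyu] using hy, hyv⟩
    rw [hsupport]
    by_cases hmarked : ∃ x ∈ M, x ∈ w.support ∧ x ≠ u'
    · obtain ⟨T₁, T₂, hT, h⟩ := ih hw' hmarked hv
      refine ⟨insert u T₁, T₂, hT.insert hadj hu', h.imp (fun h => ?_) ?_⟩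
      · exact ⟨h.1.mono (subset_insert _ _) subset_rfl,
          h.2.1.mono (inter_subset_inter_left _ (subset_insert _ _)), h.2.2⟩
      · rintro ⟨p, hpM, hp, hpT, hp₁, hp₂⟩
        have hpu : p ≠ u := fun h => huM (h ▸ hpM)
        exact ⟨p, hpM, by simp [hp], by simpa [hpu] using hpT,
          neighborhood_mono (subset_insert _ _) hp₁, hp₂⟩
    · push Not at hmarked
      obtain ⟨y, hyM, hy, hyv⟩ := hv
      obtain rfl := hmarked y hyM hy
      obtain ⟨T₁, T₂, hT, hyT⟩ := exists_isRootedPair_deleting_snd hadj w hw hyv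
      exact ⟨T₁, T₂, hsupport ▸ hT, Or.inr ⟨y, hyM, by simp, hyT⟩⟩

lemma IsBranchFamily.cons {n : ℕ} {T : Fin n → Set V} (hT : IsBranchFamily G T) {A : Set V}
    (hA : (G.induce A).Connected) (hdisj : ∀ i, Disjoint A (T i)) :
    IsBranchFamily G (Fin.cons A T : Fin (n + 1) → Set V) where
  connected := Fin.cases hA hT.connected
  disjoint := pairwise_fin_succ_iff.2 ⟨fun i => (hdisj i).symm, hdisj, hT.disjoint⟩

lemma pairwise_touches_cons {n : ℕ} {T : Fin n → Set V} {A : Set V}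
    (hT : Pairwise fun i j => Touches G (T i) (T j)) (hA : ∀ i, Touches G A (T i)) :
    Pairwise fun i j => Touches G ((Fin.cons A T : Fin (n + 1) → Set V) i)
      ((Fin.cons A T : Fin (n + 1) → Set V) j) :=
  pairwise_fin_succ_iff.2 ⟨fun i => (hA i).symm, hA, hT⟩

lemma isMinor_completeBipartiteGraph {ι κ : Type*} {S : ι → Set V} {T : κ → Set V}
    (hS : IsBranchFamily G S) (hT : IsBranchFamily G T) (hdisj : ∀ i j, Disjoint (S i) (T j))
    (htouch : ∀ i j, Touches G (S i) (T j)) : IsMinor (completeBipartiteGraph ι κ) G := by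
  refine ⟨Sum.elim S T, ⟨?_, ?_⟩, ?_⟩
  · rintro (i | j)
    exacts [hS.connected i, hT.connected j]
  · rintro (i | i) (j | j) hij
    exacts [hS.disjoint (ne_of_apply_ne _ hij), hdisj i j, (hdisj j i).symm,
      hT.disjoint (ne_of_apply_ne _ hij)]
  · rintro (i | i) (j | j) hij
    · simp at hij
    · exact htouch i j
    · exact (htouch j i).symm
    · simp at hij

lemma exists_mem_neighborhood_ne {J P C : Set V} {a b c : V}
    (hJ : (G.induce (J \ {a})).Preconnected) (hCJ : C ⊆ J \ P)
    (hclosed : ¬ Touches G C ((J \ P) \ C)) (hc : c ∈ C) (hca : c ≠ a) (hbJ : b ∈ J) (hbP : b ∈ P)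
    (hba : b ≠ a) : ∃ x ∈ neighborhood G C, x ∈ P ∧ x ≠ a := by
  obtain ⟨y, ⟨-, hyC⟩, x, ⟨⟨hxJ, hxa⟩, hxC⟩, hyx⟩ := touches_of_preconnected hJ (T := C)
    ⟨c, ⟨(hCJ hc).1, hca⟩, hc⟩ ⟨b, ⟨hbJ, hba⟩, fun h => (hCJ h).2 hbP⟩
  have hxP : x ∈ P := by_contra fun hxP => hclosed ⟨y, hyC, x, ⟨⟨hxJ, hxP⟩, hxC⟩, hyx⟩
  exact ⟨x, ⟨y, hyC, hyx⟩, hxP, hxa⟩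

lemma exists_rooted_triangle_or_claw {J : Set V} {a : Fin 3 → V} (ha : a.Injective)
    (haJ : ∀ i, a i ∈ J) (hJ : ∀ i, (G.induce (J \ {a i})).Preconnected) :
    ∃ T : Fin 3 → Set V, IsBranchFamily G T ∧ (∀ i, a i ∈ T i) ∧ (∀ i, T i ⊆ J) ∧
      ((Pairwise fun i j => Touches G (T i) (T j)) ∨
        ∃ p ∈ J, ∀ i, p ∉ T i ∧ p ∈ neighborhood G (T i)) := by
  obtain ⟨w, hw, hwJ⟩ := exists_isPath_of_preconnected (hJ 0) (u := a 1) (v := a 2)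
    ⟨haJ 1, ha.ne (by decide)⟩ ⟨haJ 2, ha.ne (by decide)⟩
  obtain ⟨C, hCJ, haC, hC, hclosed⟩ := exists_component (G := G) (a := a 0)
    (S := J \ {x | x ∈ w.support}) ⟨haJ 0, fun h => (hwJ h).2 rfl⟩
  have hattached {i j : Fin 3} (hi : i ≠ 0) (hij : j ≠ i) (hj : a j ∈ w.support) :
      ∃ x ∈ neighborhood G C, x ∈ w.support ∧ x ≠ a i :=
    exists_mem_neighborhood_ne (hJ i) hCJ hclosed haC (ha.ne hi.symm) (haJ j) hj (ha.ne hij)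
  obtain ⟨T₁, T₂, hT, htouch⟩ := exists_isRootedPair_of_isPath w hw
    (hattached (by decide) (by decide) w.end_mem_support)
    (hattached (by decide) (by decide) w.start_mem_support)
  have hCw : Disjoint C {x | x ∈ w.support} := disjoint_left.2 fun x hx => (hCJ hx).2
  have hC₁ := hCw.mono_right hT.subset_left
  have hC₂ := hCw.mono_right hT.subset_right
  have hwJ' : {x | x ∈ w.support} ⊆ J := hwJ.trans sdiff_subset
  refine ⟨![C, T₁, T₂], ?_, ?_, ?_, htouch.imp ?_ ?_⟩
  · exact .cons (.cons (.cons ⟨finZeroElim, finZeroElim⟩ hT.connected_right finZeroElim)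
      hT.connected_left (Fin.cases hT.disjoint finZeroElim)) hC
      (Fin.cases hC₁ (Fin.cases hC₂ finZeroElim))
  · exact Fin.cases haC (Fin.cases hT.mem_left (Fin.cases hT.mem_right finZeroElim))
  · exact Fin.cases (hCJ.trans sdiff_subset) (Fin.cases (hT.subset_left.trans hwJ')
      (Fin.cases (hT.subset_right.trans hwJ') finZeroElim))
  · rintro ⟨h₁₂, ⟨x, hx₁, hx⟩, y, hy₂, hy⟩
    have h₁ := touches_of_mem_neighborhood hx hx₁
    have h₂ := touches_of_mem_neighborhood hy hy₂
    exact pairwise_touches_cons (pairwise_touches_cons (pairwise_touches_cons finZeroElim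
      finZeroElim) (Fin.cases h₁₂ finZeroElim)) (Fin.cases h₁ (Fin.cases h₂ finZeroElim))
  · rintro ⟨p, hpC, hp, hpT, hp₁, hp₂⟩
    have hpC' : p ∉ C := fun h => (hCJ h).2 hp
    rw [mem_union, not_or] at hpT
    exact ⟨p, hwJ' hp, Fin.cases ⟨hpC', hpC⟩ (Fin.cases ⟨hpT.1, hp₁⟩
      (Fin.cases ⟨hpT.2, hp₂⟩ finZeroElim))⟩

lemma KuratowskiMinorFree.exists_not_preconnected (hG : KuratowskiMinorFree G) {A X : Set V}
    (hA : (G.induce A).Preconnected) (hAX : Disjoint A X) {v : V} (hv : v ∈ X ∩ neighborhood G A)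
    {a : Fin 3 → V} (ha : a.Injective) (haX : ∀ i, a i ∈ X ∩ neighborhood G A)
    (hadj : ∀ i, G.Adj v (a i)) : ∃ i, ¬ (G.induce (X \ {v, a i})).Preconnected := by
  by_contra! hconn
  have hJ (i : Fin 3) : (G.induce ((X \ {v}) \ {a i})).Preconnected := by
    rw [sdiff_sdiff_left]
    exact hconn i
  obtain ⟨T, hT, haT, hTX, htouch⟩ :=
    exists_rooted_triangle_or_claw (J := X \ {v}) ha (fun i => ⟨(haX i).1, (hadj i).ne'⟩) hJ
  obtain ⟨b, hbA, -⟩ := id hv.2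
  have : Nonempty A := ⟨⟨b, hbA⟩⟩
  have hAconn : (G.induce A).Connected := ⟨hA⟩
  have hvconn : (G.induce {v}).Connected := .of_subsingleton
  have hAT (i) : Disjoint A (T i) := hAX.mono_right ((hTX i).trans sdiff_subset)
  have hvT (i) : Disjoint {v} (T i) := disjoint_singleton_left.2 fun h => (hTX i h).2 rfl
  have hAv : Disjoint A {v} := disjoint_singleton_right.2 fun h => disjoint_left.1 hAX h hv.1
  have hAtouch (i) : Touches G A (T i) := touches_of_mem_neighborhood (haX i).2 (haT i)
  have hvtouch (i) : Touches G {v} (T i) := ⟨v, rfl, a i, haT i, hadj i⟩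
  rcases htouch with htriangle | ⟨p, hp, hpT⟩
  · have hfamily := (hT.cons hvconn hvT).cons hAconn (Fin.cases hAv hAT)
    have hpairwise := pairwise_touches_cons (pairwise_touches_cons htriangle hvtouch)
      (Fin.cases (touches_of_mem_neighborhood hv.2 rfl) hAtouch)
    exact hG.not_isMinor_completeGraph ⟨_, hfamily, fun _ _ h => hpairwise h⟩
  · have hpT' (i) : Disjoint {p} (T i) := disjoint_singleton_left.2 (hpT i).1
    have hAp : Disjoint A {p} := hAX.mono_right (singleton_subset_iff.2 hp.1)
    have hptouch (i) : Touches G {p} (T i) :=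
      (touches_of_mem_neighborhood (hpT i).2 (mem_singleton p)).symm
    have hfamily : IsBranchFamily G ![A, {v}, {p}] :=
      .cons (.cons (.cons ⟨finZeroElim, finZeroElim⟩ .of_subsingleton finZeroElim) hvconn
        (Fin.cases (disjoint_singleton.2 (Ne.symm hp.2)) finZeroElim)) hAconn
        (Fin.cases hAv (Fin.cases hAp finZeroElim))
    exact hG.not_isMinor_completeBipartiteGraph (isMinor_completeBipartiteGraph hfamily hT
      (Fin.cases hAT (Fin.cases hvT (Fin.cases hpT' finZeroElim)))
      (Fin.cases hAtouch (Fin.cases hvtouch (Fin.cases hptouch finZeroElim))))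

end RootedMinor

section ListColoring

variable {V α : Type*} {G : SimpleGraph V} {X Y : Finset V} {L L' : V → Finset α} {c : V → α}

/-- `c` properly colours the subgraph of `G` induced on `X` from the lists `L`. The values of `c`
outside `X` are irrelevant. -/
def IsListColoringOn (G : SimpleGraph V) (X : Finset V) (L : V → Finset α) (c : V → α) : Prop :=
  (∀ v ∈ X, c v ∈ L v) ∧ ∀ u ∈ X, ∀ v ∈ X, G.Adj u v → c u ≠ c v

/-- The subgraph of `G` induced on `X` is colourable from the lists `L`. -/
def ColorableOn (G : SimpleGraph V) (X : Finset V) (L : V → Finset α) : Prop :=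
  ∃ c, IsListColoringOn G X L c

lemma IsListColoringOn.of_forall_mem (h : IsListColoringOn G X L c) (hL : ∀ v ∈ X, c v ∈ L' v) :
    IsListColoringOn G X L' c :=
  ⟨hL, h.2⟩

section RemoveColors

variable [DecidableEq α] {N : Set V} {S : Finset α} {v : V}

open scoped Classical in
/-- The lists obtained from `L` by forbidding the colours of `S` at the vertices of `N`. -/
def removeColors (L : V → Finset α) (N : Set V) (S : Finset α) (v : V) : Finset α :=
  if v ∈ N then L v \ S else L v

lemma removeColors_of_notMem (hv : v ∉ N) : removeColors L N S v = L v :=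
  if_neg hv

lemma removeColors_of_mem (hv : v ∈ N) : removeColors L N S v = L v \ S :=
  if_pos hv

lemma removeColors_subset : removeColors L N S v ⊆ L v := by
  rw [removeColors]
  split_ifs
  · exact Finset.sdiff_subset
  · exact subset_rfl

lemma card_le_card_removeColors {n : ℕ} (h : n + S.card ≤ (L v).card) :
    n ≤ (removeColors L N S v).card := by
  rw [removeColors]
  split_ifs
  · have := Finset.le_card_sdiff S (L v)
    omega
  · omega

end RemoveColors

variable [DecidableEq V]

lemma IsListColoringOn.update {v : V} (h : IsListColoringOn G (X.erase v) L c) {γ : α}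
    (hγ : γ ∈ L v) (hadj : ∀ u ∈ X, G.Adj v u → c u ≠ γ) :
    IsListColoringOn G X L (Function.update c v γ) := by
  refine ⟨fun u hu => ?_, fun u hu w hw huw => ?_⟩
  · rcases eq_or_ne u v with rfl | huv
    · rwa [Function.update_self]
    · rw [Function.update_of_ne huv]
      exact h.1 u (Finset.mem_erase.2 ⟨huv, hu⟩)
  · rcases eq_or_ne u v with rfl | huv
    · rw [Function.update_self, Function.update_of_ne huw.ne']
      exact (hadj w hw huw).symm
    · rcases eq_or_ne w v with rfl | hwv
      · rw [Function.update_self, Function.update_of_ne huv]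
        exact hadj u hu huw.symm
      · rw [Function.update_of_ne huv, Function.update_of_ne hwv]
        exact h.2 u (Finset.mem_erase.2 ⟨huv, hu⟩) w (Finset.mem_erase.2 ⟨hwv, hw⟩) huw

lemma IsListColoringOn.colorableOn_union {c' : V → α} (h : IsListColoringOn G X L c)
    (h' : IsListColoringOn G Y L c') (heq : ∀ v ∈ X ∩ Y, c' v = c v)
    (htouch : ¬ Touches G (X \ Y : Set V) (Y \ X)) : ColorableOn G (X ∪ Y) L := by
  have hX : EqOn ((X : Set V).piecewise c c') c X := piecewise_eqOn _ _ _
  have hY : EqOn ((X : Set V).piecewise c c') c' Y := fun v hv => by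
    by_cases hvX : v ∈ X
    · exact (hX hvX).trans (heq v (Finset.mem_inter.2 ⟨hvX, hv⟩)).symm
    · exact piecewise_eq_of_notMem _ _ _ hvX
  refine ⟨(X : Set V).piecewise c c', fun v hv => ?_, fun u hu v hv huv => ?_⟩
  · rcases Finset.mem_union.1 hv with hv | hv
    · exact hX hv ▸ h.1 v hv
    · exact hY hv ▸ h'.1 v hv
  · by_cases huvX : u ∈ X ∧ v ∈ X
    · exact hX huvX.1 ▸ hX huvX.2 ▸ h.2 u huvX.1 v huvX.2 huv
    by_cases huvY : u ∈ Y ∧ v ∈ Y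
    · exact hY huvY.1 ▸ hY huvY.2 ▸ h'.2 u huvY.1 v huvY.2 huv
    rw [Finset.mem_union] at hu hv
    refine absurd ?_ htouch
    by_cases huX : u ∈ X
    · exact ⟨u, ⟨huX, fun huY => huvY ⟨huY, by tauto⟩⟩, v, ⟨by tauto, by tauto⟩, huv⟩
    · exact ⟨v, ⟨by tauto, by tauto⟩, u, ⟨by tauto, huX⟩, huv.symm⟩

lemma colorableOn_of_removeColors [DecidableEq α] {v : V} {γ : α} (hγ : γ ∈ L v)
    (h : ColorableOn G (X.erase v) (removeColors L (G.neighborSet v) {γ})) :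
    ColorableOn G X L := by
  obtain ⟨c, hc⟩ := h
  refine ⟨_, (hc.of_forall_mem fun u hu => removeColors_subset (hc.1 u hu)).update hγ
    fun u hu hvu hcu => ?_⟩
  have hcu' := hc.1 u (Finset.mem_erase.2 ⟨hvu.ne', hu⟩)
  rw [removeColors_of_mem (show u ∈ G.neighborSet v from hvu), hcu] at hcu'
  exact (Finset.mem_sdiff.1 hcu').2 (Finset.mem_singleton_self γ)

end ListColoring

section Separation

variable {V : Type*} {G : SimpleGraph V} {x y : V}

lemma exists_separation_of_not_preconnected {S : Set V} (hS : ¬ (G.induce S).Preconnected)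
    (hxy : y = x ∨ G.Adj x y) : ∃ C ⊆ S, C.Nonempty ∧ (S \ C).Nonempty ∧ x ∉ C ∧ y ∉ C ∧
      ¬ Touches G C (S \ C) := by
  obtain ⟨u, v, huv⟩ : ∃ u v : S, ¬ (G.induce S).Reachable u v := by
    simpa only [SimpleGraph.Preconnected, not_forall] using hS
  obtain ⟨C, hCS, huC, hC, htouch⟩ := exists_component u.2
  have hvC : v.1 ∉ C := fun hvC => huv <|
    (hC ⟨u, huC⟩ ⟨v, hvC⟩).map (SimpleGraph.induceHomOfLE G hCS).toHom
  by_cases hxyC : x ∈ C ∨ y ∈ C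
  · have hdisj {w z : V} (hwz : w = z ∨ G.Adj w z) (hw : w ∈ C) : z ∉ S \ C := by
      rintro ⟨hzS, hzC⟩
      rcases hwz with rfl | hadj
      · exact hzC hw
      · exact htouch ⟨w, hw, z, ⟨hzS, hzC⟩, hadj⟩
    refine ⟨S \ C, sdiff_subset, ⟨v, v.2, hvC⟩, ?_⟩
    rw [sdiff_sdiff_cancel_left hCS]
    refine ⟨⟨u, huC⟩, ?_, ?_, fun h => htouch h.symm⟩
    · rcases hxyC with hx | hy
      · exact hdisj (.inl rfl) hx
      · exact hdisj (hxy.imp_right SimpleGraph.Adj.symm) hy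
    · rcases hxyC with hx | hy
      · exact hdisj (hxy.imp_left Eq.symm) hx
      · exact hdisj (.inl rfl) hy
  · exact ⟨C, hCS, ⟨u, huC⟩, ⟨v, v.2, hvC⟩, mt .inl hxyC, mt .inr hxyC, htouch⟩

lemma exists_finset_separation [DecidableEq V] {X K : Finset V} (hKX : K ⊆ X)
    (hK : ¬ (G.induce (X \ K : Set V)).Preconnected) (hx : x ∈ X) (hy : y ∈ X)
    (hxy : y = x ∨ G.Adj x y) : ∃ X₁ ⊂ X, ∃ X₂ ⊂ X, X₁ ∪ X₂ = X ∧ X₁ ∩ X₂ = K ∧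
      x ∈ X₁ ∧ y ∈ X₁ ∧ ¬ Touches G (X₁ \ X₂ : Set V) (X₂ \ X₁) := by
  obtain ⟨C, hC, ⟨u, hu⟩, ⟨v, ⟨hvX, hvK⟩, hvC⟩, hxC, hyC, htouch⟩ :=
    exists_separation_of_not_preconnected hK hxy
  lift C to Finset V using X.finite_toSet.subset (hC.trans sdiff_subset)
  have hCX : C ⊆ X := fun z hz => (hC hz).1
  have hCK : Disjoint C K := Finset.disjoint_left.2 fun z hz => (hC hz).2
  refine ⟨X \ C, Finset.ssubset_iff_subset_ne.2 ⟨Finset.sdiff_subset, ?_⟩, C ∪ K,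
    Finset.ssubset_iff_subset_ne.2 ⟨Finset.union_subset hCX hKX, ?_⟩, ?_, ?_,
    Finset.mem_sdiff.2 ⟨hx, hxC⟩, Finset.mem_sdiff.2 ⟨hy, hyC⟩, ?_⟩
  · exact fun h => (Finset.mem_sdiff.1 (h ▸ hCX hu)).2 hu
  · exact fun h => (Finset.mem_union.1 (h ▸ hvX)).elim hvC hvK
  · rw [← Finset.union_assoc, Finset.sdiff_union_of_subset hCX, Finset.union_eq_left.2 hKX]
  · rw [Finset.inter_union_distrib_left, Finset.sdiff_inter_self, Finset.empty_union,
      Finset.inter_eq_right]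
    exact Finset.subset_sdiff.2 ⟨hKX, hCK.symm⟩
  · refine fun h => htouch (h.symm.mono ?_ ?_)
    · rintro z ⟨hzX₂, hzX₁⟩
      push_cast at hzX₁ hzX₂
      exact hzX₂.elim id fun hzK => by_contra fun hzC => hzX₁ ⟨hKX hzK, hzC⟩
    · rintro z ⟨hzX₁, hzX₂⟩
      push_cast at hzX₁ hzX₂
      exact ⟨⟨hzX₁.1, mt .inr hzX₂⟩, hzX₁.2⟩

end Separation

section ThomassenInduction

variable {V α : Type*} {G : SimpleGraph V} {A : Set V} {X Y : Finset V} {L : V → Finset α}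
  {x y : V}

/-- `A` plays the role of the outer face for the subgraph induced on `X`: the boundary vertices are
those with a neighbour in `A`, and all the other vertices have lists of at least five colours. -/
structure IsExterior (G : SimpleGraph V) (A : Set V) (X : Finset V) (L : V → Finset α) : Prop where
  preconnected : (G.induce A).Preconnected
  disjoint : Disjoint A X
  five_le_card : ∀ v ∈ X, v ∉ neighborhood G A → 5 ≤ (L v).card

/-- The hypotheses of Thomassen's induction: `x` and `y` are boundary vertices with lists of at
least one and two colours, and every other vertex has a list of at least three colours. The vertices
`x` and `y` are adjacent or equal; if they are equal, one colour suffices. -/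
structure IsRootedExterior (G : SimpleGraph V) (A : Set V) (X : Finset V) (L : V → Finset α)
    (x y : V) : Prop extends IsExterior G A X L where
  mem_left : x ∈ (X ∩ neighborhood G A : Set V)
  mem_right : y ∈ (X ∩ neighborhood G A : Set V)
  eq_or_adj : y = x ∨ G.Adj x y
  nonempty : (L x).Nonempty
  two_le_card : y ≠ x → 2 ≤ (L y).card
  three_le_card : ∀ v ∈ X, v ≠ x → v ≠ y → 3 ≤ (L v).card

/-- Thomassen's strengthening of 5-choosability for the subgraph induced on `X`, with colours
in `α`. -/
def RootedColorable (G : SimpleGraph V) (α : Type*) (X : Finset V) : Prop :=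
  ∀ ⦃A : Set V⦄ ⦃L : V → Finset α⦄ ⦃x y : V⦄, IsRootedExterior G A X L x y → ColorableOn G X L

lemma IsExterior.mono (h : IsExterior G A X L) (hYX : Y ⊆ X) : IsExterior G A Y L where
  preconnected := h.preconnected
  disjoint := h.disjoint.mono_right (Finset.coe_subset.2 hYX)
  five_le_card v hv := h.five_le_card v (hYX hv)

lemma neighborSet_subset_neighborhood_insert (v : V) :
    G.neighborSet v ⊆ neighborhood G (insert v A) :=
  fun _ hvu => ⟨v, mem_insert v A, hvu⟩

section Erase

variable [DecidableEq V] [DecidableEq α]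

lemma IsExterior.erase (h : IsExterior G A X L) {v : V}
    (hA : (G.induce (insert v A)).Preconnected) {N : Set V}
    (hN : N ⊆ neighborhood G (insert v A)) (S : Finset α) :
    IsExterior G (insert v A) (X.erase v) (removeColors L N S) where
  preconnected := hA
  disjoint := disjoint_insert_left.2 ⟨Finset.notMem_erase v X,
    h.disjoint.mono_right (Finset.coe_subset.2 (Finset.erase_subset v X))⟩
  five_le_card u hu huA := by
    rw [removeColors_of_notMem fun huN => huA (hN huN)]
    exact h.five_le_card u (Finset.mem_of_mem_erase hu)
      fun huA' => huA (neighborhood_mono (subset_insert v A) huA')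

lemma IsRootedExterior.erase (h : IsRootedExterior G A X L x y) {v : V}
    (hv : v ∈ neighborhood G A) (hvx : v ≠ x) (hvy : v ≠ y) {S : Finset α} (hS : S.card ≤ 2)
    (hxS : (L x \ S).Nonempty) :
    IsRootedExterior G (insert v A) (X.erase v)
      (removeColors L (insert x (G.neighborSet v \ neighborhood G A)) S) x y := by
  have hmono := neighborhood_mono (G := G) (subset_insert v A)
  have hboundary {u} (hu : u ∈ neighborhood G A) (hux : u ≠ x) :
      removeColors L (insert x (G.neighborSet v \ neighborhood G A)) S u = L u :=
    removeColors_of_notMem fun huN => huN.elim hux fun h => h.2 hu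
  exact
    { h.toIsExterior.erase (preconnected_induce_insert h.preconnected hv)
        (insert_subset (hmono h.mem_left.2)
          (sdiff_subset.trans (neighborSet_subset_neighborhood_insert v))) S with
      mem_left := ⟨Finset.mem_erase.2 ⟨hvx.symm, h.mem_left.1⟩, hmono h.mem_left.2⟩
      mem_right := ⟨Finset.mem_erase.2 ⟨hvy.symm, h.mem_right.1⟩, hmono h.mem_right.2⟩
      eq_or_adj := h.eq_or_adj
      nonempty := by rwa [removeColors_of_mem (mem_insert x _)]
      two_le_card := fun hyx => by
        rw [hboundary h.mem_right.2 hyx]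
        exact h.two_le_card hyx
      three_le_card := fun u hu hux huy => by
        have huX := Finset.mem_of_mem_erase hu
        by_cases huA : u ∈ neighborhood G A
        · rw [hboundary huA hux]
          exact h.three_le_card u huX hux huy
        · exact card_le_card_removeColors (by linarith [h.five_le_card u huX huA]) }

end Erase

lemma IsExterior.colorableOn [Nonempty α] (h : IsExterior G A X L) (hL : ∀ v ∈ X, 3 ≤ (L v).card)
    (ih : ∀ Y ⊆ X, RootedColorable G α Y) : ColorableOn G X L := by
  classical
  induction X using Finset.strongInduction generalizing A L with
  | H X ihX =>
    by_cases hboundary : ∃ v, v ∈ (X ∩ neighborhood G A : Set V)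
    · obtain ⟨v, hv⟩ := hboundary
      exact ih X subset_rfl ⟨h, hv, hv, .inl rfl, Finset.card_pos.1 (by linarith [hL v hv.1]),
        fun hne => absurd rfl hne, fun u hu _ _ => hL u hu⟩
    have hfive (v) (hv : v ∈ X) : 5 ≤ (L v).card :=
      h.five_le_card v hv fun hvA => hboundary ⟨v, hv, hvA⟩
    have hempty : IsExterior G ∅ X L :=
      ⟨fun v => v.2.elim, empty_disjoint _, fun v hv _ => hfive v hv⟩
    obtain rfl | ⟨v, hv⟩ := X.eq_empty_or_nonempty
    · exact ⟨fun _ => Classical.arbitrary α, by simp [IsListColoringOn]⟩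
    obtain ⟨γ, hγ⟩ : (L v).Nonempty := Finset.card_pos.1 (by linarith [hfive v hv])
    have hsingleton : (G.induce (insert v ∅)).Preconnected := by
      rw [insert_empty_eq]
      exact .of_subsingleton
    exact colorableOn_of_removeColors hγ <| ihX _ (Finset.erase_ssubset hv)
      (hempty.erase hsingleton (neighborSet_subset_neighborhood_insert v) {γ})
      (fun u hu => card_le_card_removeColors (by
        linarith [hfive u (Finset.mem_of_mem_erase hu), Finset.card_singleton γ]))
      fun Y hY => ih Y (hY.trans (Finset.erase_subset v X))

lemma IsExterior.exists_isListColoringOn_eq (h : IsExterior G A X L) (hX : RootedColorable G α X)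
    {k l : V} (hk : k ∈ (X ∩ neighborhood G A : Set V)) (hl : l ∈ (X ∩ neighborhood G A : Set V))
    (hkl : G.Adj k l) (hthree : ∀ v ∈ X, v ≠ k → v ≠ l → 3 ≤ (L v).card) {β γ : α}
    (hβ : β ∈ L k) (hγ : γ ∈ L l) (hβγ : β ≠ γ) :
    ∃ c, IsListColoringOn G X L c ∧ c k = β ∧ c l = γ := by
  classical
  let L' := Function.update (Function.update L k {β}) l {β, γ}
  have hLk : L' k = {β} := by simp [L', hkl.ne]
  have hLl : L' l = {β, γ} := by simp [L']
  have hL' {v} (hvk : v ≠ k) (hvl : v ≠ l) : L' v = L v := by simp [L', hvk, hvl]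
  have hroot : IsRootedExterior G A X L' k l :=
    { preconnected := h.preconnected
      disjoint := h.disjoint
      five_le_card := fun v hv hvA => by
        rw [hL' (ne_of_mem_of_not_mem hk.2 hvA).symm (ne_of_mem_of_not_mem hl.2 hvA).symm]
        exact h.five_le_card v hv hvA
      mem_left := hk
      mem_right := hl
      eq_or_adj := .inr hkl
      nonempty := hLk ▸ Finset.singleton_nonempty _
      two_le_card := fun _ => by rw [hLl, Finset.card_pair hβγ]
      three_le_card := fun v hv hvk hvl => by
        rw [hL' hvk hvl]
        exact hthree v hv hvk hvl }
  obtain ⟨c, hc⟩ := hX hroot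
  have hck : c k = β := Finset.mem_singleton.1 (hLk ▸ hc.1 k hk.1)
  have hcl : c l = γ := by
    have hcl' := hLl ▸ hc.1 l hl.1
    rw [Finset.mem_insert, Finset.mem_singleton] at hcl'
    exact hcl'.resolve_left fun h => hc.2 k hk.1 l hl.1 hkl (hck.trans h.symm)
  refine ⟨c, hc.of_forall_mem fun v hv => ?_, hck, hcl⟩
  rcases eq_or_ne v k with rfl | hvk
  · exact hck ▸ hβ
  rcases eq_or_ne v l with rfl | hvl
  · exact hcl ▸ hγ
  exact hL' hvk hvl ▸ hc.1 v hv

lemma IsRootedExterior.colorableOn_of_chord (h : IsRootedExterior G A X L x y)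
    (ih : ∀ Y ⊂ X, RootedColorable G α Y) {k l : V} (hk : k ∈ (X ∩ neighborhood G A : Set V))
    (hl : l ∈ (X ∩ neighborhood G A : Set V)) (hkl : G.Adj k l)
    (hsep : ¬ (G.induce (X \ {k, l} : Set V)).Preconnected) : ColorableOn G X L := by
  classical
  obtain ⟨X₁, hX₁, X₂, hX₂, hunion, hinter, hx, hy, htouch⟩ :=
    exists_finset_separation (K := {k, l})
      (Finset.insert_subset hk.1 (Finset.singleton_subset_iff.2 hl.1))
      (by rwa [Finset.coe_pair]) h.mem_left.1 h.mem_right.1 h.eq_or_adj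
  have hmem (v) : v ∈ X₁ ∧ v ∈ X₂ ↔ v = k ∨ v = l := by
    rw [← Finset.mem_inter, hinter, Finset.mem_insert, Finset.mem_singleton]
  obtain ⟨hk₁, hk₂⟩ := (hmem k).2 (.inl rfl)
  obtain ⟨hl₁, hl₂⟩ := (hmem l).2 (.inr rfl)
  obtain ⟨c, hc⟩ := ih X₁ hX₁ ⟨h.mono hX₁.subset, ⟨hx, h.mem_left.2⟩, ⟨hy, h.mem_right.2⟩,
    h.eq_or_adj, h.nonempty, h.two_le_card, fun v hv => h.three_le_card v (hX₁.subset hv)⟩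
  have hthree (v) (hv : v ∈ X₂) (hvk : v ≠ k) (hvl : v ≠ l) : 3 ≤ (L v).card := by
    have hv₁ : v ∉ X₁ := fun hv₁ => ((hmem v).1 ⟨hv₁, hv⟩).elim hvk hvl
    exact h.three_le_card v (hX₂.subset hv) (ne_of_mem_of_not_mem hx hv₁).symm
      (ne_of_mem_of_not_mem hy hv₁).symm
  obtain ⟨d, hd, hdk, hdl⟩ := (h.mono hX₂.subset).exists_isListColoringOn_eq (ih X₂ hX₂)
    ⟨hk₂, hk.2⟩ ⟨hl₂, hl.2⟩ hkl hthree (hc.1 k hk₁) (hc.1 l hl₁) (hc.2 k hk₁ l hl₁ hkl)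
  rw [← hunion]
  refine hc.colorableOn_union hd (fun v hv => ?_) htouch
  rcases (hmem v).1 (Finset.mem_inter.1 hv) with rfl | rfl
  exacts [hdk, hdl]

lemma IsRootedExterior.colorableOn_of_forall_not_adj (h : IsRootedExterior G A X L x y)
    (ih : ∀ Y ⊂ X, RootedColorable G α Y)
    (hx : ∀ v ∈ (X ∩ neighborhood G A : Set V), v ≠ y → ¬ G.Adj x v) : ColorableOn G X L := by
  classical
  obtain ⟨γ, hγ⟩ := h.nonempty
  have : Nonempty α := ⟨γ⟩
  have hext := h.toIsExterior.erase (preconnected_induce_insert h.preconnected h.mem_left.2)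
    (neighborSet_subset_neighborhood_insert x) {γ}
  have hcard {n v} (hn : n + 1 ≤ (L v).card) :
      n ≤ (removeColors L (G.neighborSet x) {γ} v).card :=
    card_le_card_removeColors (by rwa [Finset.card_singleton])
  have hthree (v) (hv : v ∈ X.erase x) (hvy : v ≠ y) :
      3 ≤ (removeColors L (G.neighborSet x) {γ} v).card := by
    obtain ⟨hvx, hvX⟩ := Finset.mem_erase.1 hv
    by_cases hvA : v ∈ neighborhood G A
    · have hvx' : v ∉ G.neighborSet x := hx v ⟨hvX, hvA⟩ hvy
      rw [removeColors_of_notMem hvx']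
      exact h.three_le_card v hvX hvx hvy
    · exact hcard (by linarith [h.five_le_card v hvX hvA])
  have hssubset := Finset.erase_ssubset h.mem_left.1
  apply colorableOn_of_removeColors hγ
  rcases eq_or_ne y x with rfl | hyx
  · exact hext.colorableOn (fun v hv => hthree v hv (Finset.ne_of_mem_erase hv))
      fun Y hY => ih Y (hY.trans_ssubset hssubset)
  · have hy : y ∈ (X.erase x ∩ neighborhood G (insert x A) : Set V) :=
      ⟨Finset.mem_erase.2 ⟨hyx, h.mem_right.1⟩,
        neighborhood_mono (subset_insert x A) h.mem_right.2⟩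
    exact ih _ hssubset ⟨hext, hy, hy, .inl rfl, Finset.card_pos.1 (hcard (h.two_le_card hyx)),
      fun hne => absurd rfl hne, fun v hv hvy _ => hthree v hv hvy⟩

/-- Thomassen's step: two colours of `v` are reserved by forbidding them at the interior neighbours
of `v`, and one of the two remains for `v` after the boundary neighbour other than `x` has been
coloured. -/
lemma IsRootedExterior.colorableOn_of_adj (h : IsRootedExterior G A X L x y)
    (ih : ∀ Y ⊂ X, RootedColorable G α Y) {v : V} (hv : v ∈ (X ∩ neighborhood G A : Set V))
    (hvy : v ≠ y) (hxv : G.Adj x v)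
    (hsub : {w | w ∈ (X ∩ neighborhood G A : Set V) ∧ w ≠ x ∧ G.Adj v w}.Subsingleton) :
    ColorableOn G X L := by
  classical
  obtain ⟨γ, hγ⟩ := h.nonempty
  obtain ⟨S, hSL, hS⟩ : ∃ S ⊆ (L v).erase γ, S.card = 2 := by
    refine Finset.exists_subset_card_eq ?_
    have := h.three_le_card v hv.1 hxv.ne' hvy
    have := Finset.pred_card_le_card_erase (s := L v) (a := γ)
    omega
  have hγS : γ ∉ S := fun hγS => Finset.notMem_erase γ _ (hSL hγS)
  obtain ⟨c, hc⟩ := ih _ (Finset.erase_ssubset hv.1)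
    (h.erase hv.2 hxv.ne' hvy hS.le ⟨γ, Finset.mem_sdiff.2 ⟨hγ, hγS⟩⟩)
  obtain ⟨δ, hδS, hδ⟩ : ∃ δ ∈ S, ∀ w ∈ (X ∩ neighborhood G A : Set V), w ≠ x → G.Adj v w →
      c w ≠ δ := by
    rcases hsub.eq_empty_or_singleton with hempty | ⟨w, hw⟩
    · obtain ⟨δ, hδ⟩ : S.Nonempty := Finset.card_pos.1 (hS ▸ two_pos)
      exact ⟨δ, hδ, fun w hw hwx hvw => (hempty ▸ ⟨hw, hwx, hvw⟩ : w ∈ (∅ : Set V)).elim⟩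
    · obtain ⟨δ, hδ, hne⟩ := Finset.exists_mem_ne (hS ▸ one_lt_two) (c w)
      refine ⟨δ, hδ, fun u hu hux hvu => ?_⟩
      obtain rfl : u = w := hw.subset ⟨hu, hux, hvu⟩
      exact hne.symm
  refine ⟨_, (hc.of_forall_mem fun u hu => removeColors_subset (hc.1 u hu)).update
    (Finset.mem_of_mem_erase (hSL hδS)) fun u hu hvu hcu => ?_⟩
  by_cases huN : u ∈ insert x (G.neighborSet v \ neighborhood G A)
  · have hcu' := hc.1 u (Finset.mem_erase.2 ⟨hvu.ne', hu⟩)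
    rw [removeColors_of_mem huN, hcu] at hcu'
    exact (Finset.mem_sdiff.1 hcu').2 hδS
  · rw [mem_insert_iff, not_or, mem_sdiff, not_and_not_right] at huN
    exact hδ u ⟨hu, huN.2 hvu⟩ huN.1 hvu hcu

theorem KuratowskiMinorFree.rootedColorable (hG : KuratowskiMinorFree G) (X : Finset V) :
    RootedColorable G α X := by
  classical
  induction X using Finset.strongInduction with
  | H X ih =>
    intro A L x y h
    by_cases hchord : ∃ k ∈ (X ∩ neighborhood G A : Set V), ∃ l ∈ (X ∩ neighborhood G A : Set V),
        G.Adj k l ∧ ¬ (G.induce (X \ {k, l} : Set V)).Preconnected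
    · obtain ⟨k, hk, l, hl, hkl, hsep⟩ := hchord
      exact h.colorableOn_of_chord ih hk hl hkl hsep
    by_cases hx : ∃ v ∈ (X ∩ neighborhood G A : Set V), v ≠ y ∧ G.Adj x v
    · obtain ⟨v, hv, hvy, hxv⟩ := hx
      refine h.colorableOn_of_adj ih hv hvy hxv fun w hw w' hw' => by_contra fun hne => hchord ?_
      have ha : Function.Injective ![x, w, w'] :=
        Fin.cons_injective_iff.2 ⟨by simp [hw.2.1.symm, hw'.2.1.symm], injective_pair_iff_ne.2 hne⟩
      have haX : ∀ i, ![x, w, w'] i ∈ (X ∩ neighborhood G A : Set V) :=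
        Fin.cases h.mem_left (Fin.cases hw.1 (Fin.cases hw'.1 finZeroElim))
      have hadj : ∀ i, G.Adj v (![x, w, w'] i) :=
        Fin.cases hxv.symm (Fin.cases hw.2.2 (Fin.cases hw'.2.2 finZeroElim))
      obtain ⟨i, hi⟩ := hG.exists_not_preconnected h.preconnected h.disjoint hv ha haX hadj
      exact ⟨v, hv, _, haX i, hadj i, hi⟩
    · push Not at hx
      exact h.colorableOn_of_forall_not_adj ih hx

end ThomassenInduction

section Compactness

variable {V α : Type*} {G : SimpleGraph V}

lemma KuratowskiMinorFree.colorableOn [Nonempty α] (hG : KuratowskiMinorFree G) (X : Finset V)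
    (L : V → Finset α) (hL : ∀ v ∈ X, 5 ≤ (L v).card) : ColorableOn G X L := by
  classical
  have hext : IsExterior G ∅ X L := ⟨fun v => v.2.elim, empty_disjoint _, fun v hv _ => hL v hv⟩
  exact hext.colorableOn (fun v hv => by linarith [hL v hv]) fun Y _ => hG.rootedColorable Y

lemma exists_coloring_of_forall_colorableOn {L : V → Finset α}
    (h : ∀ X : Finset V, ColorableOn G X L) :
    ∃ c : V → α, (∀ v, c v ∈ L v) ∧ ∀ ⦃u v⦄, G.Adj u v → c u ≠ c v := by
  choose c hc using h
  obtain ⟨d, hd⟩ := Finset.rado_selection_subtype (β := fun v => L v)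
    fun X v => ⟨c X v, (hc X).1 v v.2⟩
  refine ⟨fun v => d v, fun v => (d v).2, fun u v huv => ?_⟩
  classical
  obtain ⟨X, hX, hdX⟩ := hd {u, v}
  have hu := Finset.mem_insert_self u {v}
  have hv := Finset.mem_insert_of_mem (b := u) (Finset.mem_singleton_self v)
  have hdu : d u = _ := hdX ⟨u, hu⟩
  have hdv : d v = _ := hdX ⟨v, hv⟩
  change (d u : α) ≠ d v
  rw [hdu, hdv]
  exact (hc X).2 u (hX hu) v (hX hv) huv

end Compactness

theorem planar_graphs_are_5_choosable_general {V : Type} (G : SimpleGraph V)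
    (hG : KuratowskiMinorFree G) (L : V → Finset ℕ) (hL : ∀ v, 5 ≤ (L v).card) :
    ListColorable G L :=
  exists_coloring_of_forall_colorableOn fun X => hG.colorableOn X L fun v _ => hL v

/-- **Every planar graph is 5-choosable.**  If `G` admits a drawing in the plane without
crossings, then `G` has a proper coloring from any assignment of lists of size at least 5. -/
theorem planar_graphs_are_5_choosable
    {V : Type} [Fintype V] (G : SimpleGraph V) (D : Drawing G) (hplane : D.IsPlane)
    (L : V → Finset ℕ) (hL : ∀ v : V, 5 ≤ (L v).card) :
    ListColorable G L :=
  planar_graphs_are_5_choosable_general G hplane.kuratowskiMinorFree L hL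
end
end
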